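/- arXiv:2202.00992 — 2 statements merged into one kernel-verified Lean document; each statement's English description precedes it below -/
import Mathlib

section
/- Let ζ>0, 0<β<1 and 0<α<2(1+β). Let ρ be a finite Borel measure on [0,1] such that lim_{λ→0+} ρ([0,λ])/λ^ζ = 1. Define polynomials q_n by q_0 = 1, q_1(λ) = 1-αλ, and q_{n+1}(λ) = (1-αλ)q_n(λ) + β(q_n(λ)-q_{n-1}(λ)) for n ≥ 1, and set L_n = (1/2)∫_{[0,1]} q_n(λ)² ρ(dλ). Then lim_{n→∞} (2αn/(1-β))^ζ · L_n = Γ(ζ+1)/2. -/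
open MeasureTheory Filter Set

/-!
Near `l = 0` the characteristic polynomial `t ^ 2 - (1 + β - α * l) * t + β` of the recurrence has
the roots `z(l) = 1 - α * l / (1 - β) + o(l)` and `w(l) → β`, so `q_n(l)` lies between multiples of
`z(l) ^ n` by constants close to `1`, and `q_n(l) ^ 2` between `θ⁻¹ * exp (-θ * s * l)` and
`θ * exp (-θ⁻¹ * s * l)` with `s = 2 * α * n / (1 - β)`, for any `θ > 1`. Away from `0` the
Schur-Cohn stability conditions hold with a uniform margin, so `q_n ^ 2` decays geometrically and
contributes nothing. The integral of `q_n ^ 2` is therefore asymptotic to the Laplace transform of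
`ρ` at `s`, which is `∫ u in Ioi 0, exp (-u) * ρ [0, u / s]`, and dominated convergence turns
`ρ [0, u / s] ~ (u / s) ^ ζ` into `s ^ (-ζ) * Γ (ζ + 1)`.
-/

open scoped Topology

theorem tendsto_of_family_sandwich {ι γ : Type*} {p : Filter ι} [p.NeBot] {l : Filter γ}
    {x : γ → ℝ} {φ ψ : ι → ℝ} {L : ℝ} (hφ : Tendsto φ p (𝓝 L)) (hψ : Tendsto ψ p (𝓝 L))
    (h : ∀ᶠ i in p, ∃ lo hi : γ → ℝ, Tendsto lo l (𝓝 (φ i)) ∧ Tendsto hi l (𝓝 (ψ i)) ∧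
      ∀ n, x n ∈ Icc (lo n) (hi n)) :
    Tendsto x l (𝓝 L) := by
  refine tendsto_order.2 ⟨fun b hb => ?_, fun b hb => ?_⟩
  · obtain ⟨i, hbi, lo, _, hlo, _, hx⟩ := ((hφ.eventually (lt_mem_nhds hb)).and h).exists
    filter_upwards [hlo.eventually (lt_mem_nhds hbi)] with n hn using hn.trans_le (hx n).1
  · obtain ⟨i, hbi, _, hi, _, hhi, hx⟩ := ((hψ.eventually (gt_mem_nhds hb)).and h).exists
    filter_upwards [hhi.eventually (gt_mem_nhds hbi)] with n hn using (hx n).2.trans_lt hn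

theorem tendsto_natCast_rpow_mul_pow (p : ℝ) {r : ℝ} (hr0 : 0 ≤ r) (hr1 : r < 1) :
    Tendsto (fun n : ℕ => (n : ℝ) ^ p * r ^ n) atTop (𝓝 0) := by
  refine squeeze_zero' (.of_forall fun n => by positivity) ?_
    (tendsto_pow_const_mul_const_pow_of_lt_one ⌈p⌉₊ hr0 hr1)
  filter_upwards [eventually_ge_atTop 1] with n hn
  rw [← Real.rpow_natCast (n : ℝ) ⌈p⌉₊]
  gcongr
  · exact_mod_cast hn
  · exact Nat.le_ceil p

theorem eventually_mem_Icc_exp_of_hasDerivAt {f : ℝ → ℝ} {f' a b : ℝ} (hf0 : f 0 = 1)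
    (hf : HasDerivAt f f' 0) (ha : a < f') (hb : f' < b) :
    ∀ᶠ l in 𝓝[≥] 0, f l ∈ Icc (Real.exp (a * l)) (Real.exp (b * l)) := by
  have hlog : HasDerivAt (fun l => Real.log (f l)) f' 0 := by
    simpa [hf0] using hf.log (by simp [hf0])
  have herr := hasDerivAt_iff_isLittleO_nhds_zero.1 hlog
  have hpos : ∀ᶠ l in 𝓝 0, 0 < f l := hf.continuousAt.eventually_const_lt (by simp [hf0])
  filter_upwards [self_mem_nhdsWithin, nhdsWithin_le_nhds hpos,
    nhdsWithin_le_nhds (herr.def (lt_min (sub_pos.2 ha) (sub_pos.2 hb)))] with l hl hfl hlin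
  rw [mem_Ici] at hl
  simp only [zero_add, hf0, Real.log_one, sub_zero, smul_eq_mul, Real.norm_eq_abs,
    abs_of_nonneg hl] at hlin
  obtain ⟨hlo, hhi⟩ := abs_le.1 hlin
  have hmin_a := mul_le_mul_of_nonneg_right (min_le_left (f' - a) (b - f')) hl
  have hmin_b := mul_le_mul_of_nonneg_right (min_le_right (f' - a) (b - f')) hl
  rw [mem_Icc, ← Real.le_log_iff_exp_le hfl, ← Real.log_le_iff_le_exp hfl]
  constructor <;> linarith

theorem integral_mem_Icc_of_ae_mem_Icc {X : Type*} [MeasurableSpace X] {μ : Measure X}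
    [IsFiniteMeasure μ] {f g h : X → ℝ} {a b e : ℝ} (hf : Integrable f μ) (hg : Integrable g μ)
    (hh : Integrable h μ) (hsand : ∀ᵐ x ∂μ, f x ∈ Icc (a * g x - e) (b * h x + e)) :
    ∫ x, f x ∂μ ∈ Icc (a * ∫ x, g x ∂μ - μ.real univ * e)
      (b * ∫ x, h x ∂μ + μ.real univ * e) := by
  constructor
  · calc a * ∫ x, g x ∂μ - μ.real univ * e = ∫ x, (a * g x - e) ∂μ := by
          rw [integral_sub (hg.const_mul a) (integrable_const e), integral_const_mul,
            integral_const, smul_eq_mul]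
      _ ≤ ∫ x, f x ∂μ := integral_mono_ae ((hg.const_mul a).sub (integrable_const e)) hf
          (hsand.mono fun _ hx => hx.1)
  · calc ∫ x, f x ∂μ ≤ ∫ x, (b * h x + e) ∂μ :=
          integral_mono_ae hf ((hh.const_mul b).add (integrable_const e))
            (hsand.mono fun _ hx => hx.2)
      _ = b * ∫ x, h x ∂μ + μ.real univ * e := by
          rw [integral_add (hh.const_mul b) (integrable_const e), integral_const_mul,
            integral_const, smul_eq_mul]

section Laplace

variable {ρ : Measure ℝ} [IsFiniteMeasure ρ] {ζ c : ℝ}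

theorem integrable_exp_neg_mul (hρ : ∀ᵐ l ∂ρ, 0 ≤ l) {s : ℝ} (hs : 0 ≤ s) :
    Integrable (fun l => Real.exp (-(s * l))) ρ := by
  refine Integrable.of_bound (by fun_prop) 1 ?_
  filter_upwards [hρ] with l hl
  simpa using mul_nonneg hs hl

theorem integral_exp_neg_mul_eq_integral_Ioi (hρ : ∀ᵐ l ∂ρ, 0 ≤ l) {s : ℝ} (hs : 0 < s) :
    ∫ l, Real.exp (-(s * l)) ∂ρ = ∫ u in Ioi 0, Real.exp (-u) * ρ.real (Iic (u / s)) := by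
  let k : ℝ → ℝ → ℝ := fun l => (Ici (s * l)).indicator fun u => Real.exp (-u)
  have hk : Integrable (Function.uncurry k) (ρ.prod (volume.restrict (Ici 0))) := by
    have hexp : Integrable (fun u : ℝ => Real.exp (-u)) (volume.restrict (Ici 0)) :=
      (integrableOn_Ici_iff_integrableOn_Ioi (by simp)).2 (integrableOn_exp_neg_Ioi 0)
    exact (hexp.comp_snd ρ).indicator
      (measurableSet_le (by fun_prop : Measurable fun p : ℝ × ℝ => s * p.1) measurable_snd)
  have inner_u : ∀ l, 0 ≤ l → ∫ u in Ici 0, k l u = Real.exp (-(s * l)) := fun l hl => by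
    rw [setIntegral_indicator measurableSet_Ici, Ici_inter_Ici, max_eq_right (by positivity),
      integral_Ici_eq_integral_Ioi, integral_exp_neg_Ioi]
  have inner_l : ∀ u, ∫ l, k l u ∂ρ = Real.exp (-u) * ρ.real (Iic (u / s)) := fun u => by
    have : (fun l => k l u) = (Iic (u / s)).indicator fun _ => Real.exp (-u) := by
      ext l
      simp [k, indicator_apply, le_div_iff₀' hs]
    rw [this, integral_indicator_const _ measurableSet_Iic, smul_eq_mul, mul_comm]
  calc ∫ l, Real.exp (-(s * l)) ∂ρ
      = ∫ l, (∫ u in Ici 0, k l u) ∂ρ :=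
        integral_congr_ae (hρ.mono fun l hl => (inner_u l hl).symm)
    _ = ∫ u in Ici 0, (∫ l, k l u ∂ρ) := integral_integral_swap hk
    _ = ∫ u in Ioi 0, Real.exp (-u) * ρ.real (Iic (u / s)) := by
        simp only [inner_l, integral_Ici_eq_integral_Ioi]

theorem exists_measureReal_Iic_le_mul_rpow (hζ : 0 ≤ ζ)
    (hlim : Tendsto (fun l => ρ.real (Iic l) / l ^ ζ) (𝓝[>] 0) (𝓝 c)) :
    ∃ C, ∀ l, 0 < l → ρ.real (Iic l) ≤ C * l ^ ζ := by
  obtain ⟨d, hd : 0 < d, hnear⟩ := mem_nhdsGT_iff_exists_Ioo_subset.1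
    (hlim.eventually (gt_mem_nhds (lt_add_one c)))
  refine ⟨max (c + 1) (ρ.real univ / d ^ ζ), fun l hl => ?_⟩
  rcases lt_or_ge l d with hld | hdl
  · have h : ρ.real (Iic l) / l ^ ζ < c + 1 := hnear ⟨hl, hld⟩
    exact ((div_le_iff₀ (by positivity)).1 h.le).trans (by gcongr; exact le_max_left _ _)
  · calc ρ.real (Iic l) ≤ ρ.real univ := measureReal_mono (subset_univ _)
      _ = ρ.real univ / d ^ ζ * d ^ ζ := by field_simp
      _ ≤ max (c + 1) (ρ.real univ / d ^ ζ) * l ^ ζ := by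
        gcongr
        exact le_max_right _ _

theorem tendsto_rpow_mul_comp_div {F : ℝ → ℝ}
    (hlim : Tendsto (fun l => F l / l ^ ζ) (𝓝[>] 0) (𝓝 c)) {u : ℝ} (hu : 0 < u) :
    Tendsto (fun s => s ^ ζ * F (u / s)) atTop (𝓝 (c * u ^ ζ)) := by
  have hdiv : Tendsto (fun s : ℝ => u / s) atTop (𝓝[>] 0) :=
    tendsto_nhdsWithin_iff.2 ⟨tendsto_const_nhds.div_atTop tendsto_id,
      (eventually_gt_atTop 0).mono fun s hs => div_pos hu hs⟩
  refine ((hlim.comp hdiv).mul_const (u ^ ζ)).congr' ?_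
  filter_upwards [eventually_gt_atTop 0] with s hs
  rw [Function.comp_apply, Real.div_rpow hu.le hs.le]
  field_simp

theorem tendsto_rpow_mul_integral_exp_neg_mul (hρ : ∀ᵐ l ∂ρ, 0 ≤ l) (hζ : 0 ≤ ζ)
    (hlim : Tendsto (fun l => ρ.real (Iic l) / l ^ ζ) (𝓝[>] 0) (𝓝 c)) :
    Tendsto (fun s : ℝ => s ^ ζ * ∫ l, Real.exp (-(s * l)) ∂ρ) atTop
      (𝓝 (c * Real.Gamma (ζ + 1))) := by
  obtain ⟨C, hC⟩ := exists_measureReal_Iic_le_mul_rpow hζ hlim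
  have hGamma : c * Real.Gamma (ζ + 1) = ∫ u in Ioi 0, Real.exp (-u) * (c * u ^ ζ) := by
    rw [Real.Gamma_eq_integral (by positivity), ← integral_const_mul]
    simp only [add_sub_cancel_right, mul_left_comm]
  have hGamma_int : IntegrableOn (fun u : ℝ => Real.exp (-u) * u ^ ζ) (Ioi 0) := by
    simpa using Real.GammaIntegral_convergent (s := ζ + 1) (by positivity)
  have hmeas (s : ℝ) : Measurable fun u => ρ.real (Iic (u / s)) := by
    have hmono : Monotone fun l => ρ.real (Iic l) := fun _ _ h =>
      measureReal_mono (Iic_subset_Iic.2 h)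
    exact hmono.measurable.comp (measurable_id.div_const s)
  rw [hGamma]
  suffices Tendsto (fun s : ℝ => ∫ u in Ioi 0, Real.exp (-u) * (s ^ ζ * ρ.real (Iic (u / s))))
      atTop (𝓝 (∫ u in Ioi 0, Real.exp (-u) * (c * u ^ ζ))) by
    refine this.congr' ?_
    filter_upwards [eventually_gt_atTop 0] with s hs
    simp only [integral_exp_neg_mul_eq_integral_Ioi hρ hs, ← integral_const_mul, mul_left_comm]
  refine tendsto_integral_filter_of_dominated_convergence
    (fun u => C * (Real.exp (-u) * u ^ ζ)) ?_ ?_ (hGamma_int.const_mul C) ?_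
  · exact .of_forall fun s => Measurable.aestronglyMeasurable (by have := hmeas s; fun_prop)
  · filter_upwards [eventually_gt_atTop 0] with s hs
    filter_upwards [ae_restrict_mem measurableSet_Ioi] with u (hu : 0 < u)
    have hscaled : s ^ ζ * ρ.real (Iic (u / s)) ≤ C * u ^ ζ := by
      calc s ^ ζ * ρ.real (Iic (u / s)) ≤ s ^ ζ * (C * (u / s) ^ ζ) := by
            gcongr; exact hC _ (by positivity)
        _ = C * u ^ ζ := by rw [Real.div_rpow hu.le hs.le]; field_simp
    rw [Real.norm_of_nonneg (by positivity), mul_left_comm C]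
    gcongr
  · filter_upwards [ae_restrict_mem measurableSet_Ioi] with u hu
    exact (tendsto_rpow_mul_comp_div hlim hu).const_mul _

theorem tendsto_const_mul_rpow_mul_integral_exp_neg_mul (hρ : ∀ᵐ l ∂ρ, 0 ≤ l) (hζ : 0 ≤ ζ)
    (hlim : Tendsto (fun l => ρ.real (Iic l) / l ^ ζ) (𝓝[>] 0) (𝓝 c)) {κ t : ℝ} (hκ : 0 < κ)
    (ht : 0 < t) :
    Tendsto (fun n : ℕ => (κ * n) ^ ζ * ∫ l, Real.exp (-(t * κ * n * l)) ∂ρ) atTop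
      (𝓝 (t⁻¹ ^ ζ * (c * Real.Gamma (ζ + 1)))) := by
  have hs : Tendsto (fun n : ℕ => t * κ * (n : ℝ)) atTop atTop :=
    tendsto_natCast_atTop_atTop.const_mul_atTop (by positivity)
  have hlap := (tendsto_rpow_mul_integral_exp_neg_mul hρ hζ hlim).comp hs
  refine (hlap.const_mul _).congr fun n => ?_
  rw [Function.comp_apply, ← mul_assoc, ← Real.mul_rpow (by positivity) (by positivity)]
  congr 2
  field_simp

end Laplace

theorem exists_error_of_exp_sandwich {ρ : Measure ℝ} (hρ : ∀ᵐ l ∂ρ, 0 ≤ l) {θ κ : ℝ}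
    (hθ : 1 < θ) (hκ : 0 < κ) {f : ℕ → ℝ → ℝ}
    (hnear : ∀ᶠ l in 𝓝[≥] 0, ∀ n : ℕ, f n l ∈
      Icc (θ⁻¹ * Real.exp (-(θ * κ * n * l))) (θ * Real.exp (-(θ⁻¹ * κ * n * l))))
    (hfar : ∀ δ > 0, ∃ C r : ℝ, 0 ≤ r ∧ r < 1 ∧ ∀ᵐ l ∂ρ, δ ≤ l → ∀ n, |f n l| ≤ C * r ^ n) :
    ∃ ε : ℕ → ℝ, (∀ p : ℝ, Tendsto (fun n : ℕ => (n : ℝ) ^ p * ε n) atTop (𝓝 0)) ∧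
      ∀ᵐ l ∂ρ, ∀ n : ℕ, f n l ∈ Icc (θ⁻¹ * Real.exp (-(θ * κ * n * l)) - ε n)
        (θ * Real.exp (-(θ⁻¹ * κ * n * l)) + ε n) := by
  obtain ⟨δ, hδ : 0 < δ, hIco⟩ := mem_nhdsGE_iff_exists_Ico_subset.1 hnear
  obtain ⟨C, r, hr0, hr1, hC⟩ := hfar δ hδ
  refine ⟨fun n => |C| * r ^ n + Real.exp (-(κ * δ)) ^ n, fun p => ?_, ?_⟩
  · have hexp : Real.exp (-(κ * δ)) < 1 := Real.exp_lt_one_iff.2 (neg_lt_zero.2 (by positivity))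
    simpa [mul_add, mul_left_comm] using
      ((tendsto_natCast_rpow_mul_pow p hr0 hr1).const_mul |C|).add
        (tendsto_natCast_rpow_mul_pow p (Real.exp_pos _).le hexp)
  filter_upwards [hρ, hC] with l hl hfarl n
  rcases lt_or_ge l δ with hlδ | hδl
  · obtain ⟨hlo, hhi⟩ := hIco ⟨hl, hlδ⟩ n
    have := Real.exp_pos (-(κ * δ))
    exact ⟨(sub_le_self _ (by positivity)).trans hlo,
      hhi.trans (le_add_of_nonneg_right (by positivity))⟩
  · have hf : |f n l| ≤ |C| * r ^ n := (hfarl hδl n).trans (by gcongr; exact le_abs_self C)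
    obtain ⟨hlo, hhi⟩ := abs_le.1 hf
    have hexp : θ⁻¹ * Real.exp (-(θ * κ * n * l)) ≤ Real.exp (-(κ * δ)) ^ n := by
      rw [← Real.exp_nat_mul]
      refine (mul_le_of_le_one_left (Real.exp_pos _).le (inv_le_one_of_one_le₀ hθ.le)).trans ?_
      rw [Real.exp_le_exp]
      calc -(θ * κ * n * l) ≤ -(1 * κ * n * δ) := by gcongr
        _ = n * -(κ * δ) := by ring
    have : 0 < θ * Real.exp (-(θ⁻¹ * κ * n * l)) := by positivity
    have : 0 < Real.exp (-(κ * δ)) ^ n := by positivity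
    constructor <;> linarith

theorem tendsto_rpow_mul_integral_of_exp_sandwich {ρ : Measure ℝ} [IsFiniteMeasure ρ]
    (hρ : ∀ᵐ l ∂ρ, 0 ≤ l) {ζ c : ℝ} (hζ : 0 ≤ ζ)
    (hlim : Tendsto (fun l => ρ.real (Iic l) / l ^ ζ) (𝓝[>] 0) (𝓝 c)) {κ : ℝ} (hκ : 0 < κ)
    {f : ℕ → ℝ → ℝ} (hf : ∀ n, Integrable (f n) ρ)
    (hnear : ∀ θ > 1, ∀ᶠ l in 𝓝[≥] 0, ∀ n : ℕ, f n l ∈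
      Icc (θ⁻¹ * Real.exp (-(θ * κ * n * l))) (θ * Real.exp (-(θ⁻¹ * κ * n * l))))
    (hfar : ∀ δ > 0, ∃ C r : ℝ, 0 ≤ r ∧ r < 1 ∧ ∀ᵐ l ∂ρ, δ ≤ l → ∀ n, |f n l| ≤ C * r ^ n) :
    Tendsto (fun n : ℕ => (κ * n) ^ ζ * ∫ l, f n l ∂ρ) atTop
      (𝓝 (c * Real.Gamma (ζ + 1))) := by
  set L := c * Real.Gamma (ζ + 1)
  have hφ : Tendsto (fun θ : ℝ => θ⁻¹ * (θ⁻¹ ^ ζ * L)) (𝓝[>] 1) (𝓝 L) := by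
    have hcont : ContinuousAt (fun θ : ℝ => θ⁻¹ * (θ⁻¹ ^ ζ * L)) 1 := by fun_prop (disch := simp)
    simpa using hcont.tendsto.mono_left nhdsWithin_le_nhds
  have hψ : Tendsto (fun θ : ℝ => θ * (θ ^ ζ * L)) (𝓝[>] 1) (𝓝 L) := by
    have hcont : ContinuousAt (fun θ : ℝ => θ * (θ ^ ζ * L)) 1 := by fun_prop (disch := simp)
    simpa using hcont.tendsto.mono_left nhdsWithin_le_nhds
  refine tendsto_of_family_sandwich hφ hψ ?_
  filter_upwards [self_mem_nhdsWithin] with θ (hθ : 1 < θ)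
  have hθ0 : 0 < θ := by positivity
  obtain ⟨ε, hε, hsand⟩ := exists_error_of_exp_sandwich hρ hθ hκ (hnear θ hθ) hfar
  have hlap {t : ℝ} (ht : 0 < t) :=
    tendsto_const_mul_rpow_mul_integral_exp_neg_mul hρ hζ hlim hκ ht
  have herr : Tendsto (fun n : ℕ => (κ * n) ^ ζ * (ρ.real univ * ε n)) atTop (𝓝 0) := by
    have := (hε ζ).const_mul (κ ^ ζ * ρ.real univ)
    rw [mul_zero] at this
    refine this.congr fun n => ?_
    rw [Real.mul_rpow hκ.le n.cast_nonneg]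
    ring
  refine ⟨_, _, by simpa only [sub_zero] using ((hlap hθ0).const_mul θ⁻¹).sub herr,
    by simpa only [add_zero, inv_inv] using ((hlap (inv_pos.2 hθ0)).const_mul θ).add herr,
    fun n => ?_⟩
  have hint := integral_mem_Icc_of_ae_mem_Icc (hf n)
    (integrable_exp_neg_mul (s := θ * κ * n) hρ (by positivity))
    (integrable_exp_neg_mul (s := θ⁻¹ * κ * n) hρ (by positivity))
    (hsand.mono fun l hl => hl n)
  have hpow : 0 ≤ (κ * n) ^ ζ := by positivity
  constructor
  · linarith [mul_le_mul_of_nonneg_left hint.1 hpow]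
  · linarith [mul_le_mul_of_nonneg_left hint.2 hpow]

section Recurrence

theorem sub_mul_eq_of_recurrence {R : Type*} [CommRing R] {z w : R} {u : ℕ → R}
    (hu : ∀ n, u (n + 2) = (z + w) * u (n + 1) - z * w * u n) (n : ℕ) :
    (z - w) * u n = (u 1 - w * u 0) * z ^ n - (u 1 - z * u 0) * w ^ n := by
  induction n using Nat.twoStepInduction with
  | zero => ring
  | one => ring
  | more n ih₀ ih₁ =>
    rw [hu]
    linear_combination (z + w) * ih₁ - z * w * ih₀

theorem mem_Icc_pow_of_recurrence {z w m M : ℝ} {u : ℕ → ℝ}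
    (hu : ∀ n, u (n + 2) = (z + w) * u (n + 1) - z * w * u n) (hw : |w| ≤ z) (hzw : w < z)
    (hm : m * (z - w) + |u 1 - z * u 0| ≤ u 1 - w * u 0)
    (hM : u 1 - w * u 0 + |u 1 - z * u 0| ≤ M * (z - w)) (n : ℕ) :
    u n ∈ Icc (m * z ^ n) (M * z ^ n) := by
  have hz : 0 ≤ z ^ n := pow_nonneg ((abs_nonneg w).trans hw) n
  have hsub : |(u 1 - z * u 0) * w ^ n| ≤ |u 1 - z * u 0| * z ^ n := by
    rw [abs_mul, abs_pow]
    gcongr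
  obtain ⟨hlo, hhi⟩ := abs_le.1 hsub
  have hclosed := sub_mul_eq_of_recurrence hu n
  have hmz := mul_le_mul_of_nonneg_right hm hz
  have hMz := mul_le_mul_of_nonneg_right hM hz
  constructor <;> refine le_of_mul_le_mul_left ?_ (sub_pos.2 hzw) <;> linarith

theorem sq_le_of_recurrence {a b : ℝ} {u : ℕ → ℝ}
    (hu : ∀ n, u (n + 2) = a * u (n + 1) - b * u n) (hb : b ≤ 1) (ha : |a| ≤ 1 + b) (n : ℕ) :
    (1 + b - |a|) * u n ^ 2 ≤ (1 + b + |a|) * (u 0 ^ 2 + u 1 ^ 2) := by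
  -- `E` is the Schur-Cohn form of `t ^ 2 - a * t + b`: a Lyapunov function that, unlike the closed
  -- form of `u`, treats real, double and complex roots alike.
  set E : ℕ → ℝ := fun n => (1 + b) * (u n ^ 2 + u (n + 1) ^ 2) - 2 * a * (u n * u (n + 1)) with hE
  have hanti : Antitone E := antitone_nat_of_succ_le fun n => by
    have hdrop : E (n + 1) = E n - (1 - b) * (u (n + 2) - u n) ^ 2 := by
      simp only [hE, hu n]
      ring
    rw [hdrop]
    exact sub_le_self _ (mul_nonneg (sub_nonneg.2 hb) (sq_nonneg _))
  have hcross (n : ℕ) : |2 * a * (u n * u (n + 1))| ≤ |a| * (u n ^ 2 + u (n + 1) ^ 2) := by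
    have : 2 * |u n * u (n + 1)| ≤ u n ^ 2 + u (n + 1) ^ 2 := by
      rw [abs_mul, ← sq_abs (u n), ← sq_abs (u (n + 1)), ← mul_assoc]
      exact two_mul_le_add_sq _ _
    calc |2 * a * (u n * u (n + 1))| = |a| * (2 * |u n * u (n + 1)|) := by
          rw [abs_mul, abs_mul, abs_two]; ring
      _ ≤ _ := by gcongr
  calc (1 + b - |a|) * u n ^ 2 ≤ (1 + b - |a|) * (u n ^ 2 + u (n + 1) ^ 2) := by
        have := sub_nonneg.2 ha
        gcongr
        exact le_add_of_nonneg_right (sq_nonneg _)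
    _ ≤ E n := by linarith [(abs_le.1 (hcross n)).2]
    _ ≤ E 0 := hanti n.zero_le
    _ ≤ _ := by linarith [(abs_le.1 (hcross 0)).1]

theorem sq_le_mul_pow_of_recurrence {a b r : ℝ} {u : ℕ → ℝ}
    (hu : ∀ n, u (n + 2) = a * u (n + 1) - b * u n) (hr : 0 < r) (hb : b ≤ r ^ 2)
    (ha : |a| * r ≤ r ^ 2 + b) (n : ℕ) :
    (r ^ 2 + b - |a| * r) * u n ^ 2 ≤
      (r ^ 2 + b + |a| * r) * (u 0 ^ 2 + (u 1 / r) ^ 2) * (r ^ 2) ^ n := by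
  have hscaled := sq_le_of_recurrence (a := a / r) (b := b / r ^ 2) (u := fun n => u n / r ^ n)
    (fun n => by simp only [hu n, pow_succ]; field_simp) ((div_le_one (by positivity)).2 hb)
    (by rw [abs_div, abs_of_pos hr]; field_simp; linarith) n
  simp only [abs_div, abs_of_pos hr, pow_zero, div_one, pow_one] at hscaled
  calc (r ^ 2 + b - |a| * r) * u n ^ 2
      = r ^ 2 * (r ^ n) ^ 2 * ((1 + b / r ^ 2 - |a| / r) * (u n / r ^ n) ^ 2) := by field_simp
    _ ≤ r ^ 2 * (r ^ n) ^ 2 * ((1 + b / r ^ 2 + |a| / r) * (u 0 ^ 2 + (u 1 / r) ^ 2)) := by gcongr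
    _ = (r ^ 2 + b + |a| * r) * (u 0 ^ 2 + (u 1 / r) ^ 2) * (r ^ 2) ^ n := by
        rw [pow_right_comm]
        field_simp

theorem exists_sq_le_mul_pow_of_recurrence {b M : ℝ} (hb : b < 1) (hM : M < 1 + b) :
    ∃ C r : ℝ, 0 ≤ C ∧ 0 ≤ r ∧ r < 1 ∧ ∀ {a : ℝ}, |a| ≤ M → ∀ {u : ℕ → ℝ},
      (∀ n, u (n + 2) = a * u (n + 1) - b * u n) →
        ∀ n, u n ^ 2 ≤ C * (u 0 ^ 2 + u 1 ^ 2) * r ^ n := by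
  obtain ⟨r, ⟨hbr, hMr, hr0⟩, hr1⟩ :
      ∃ r : ℝ, (b < r ^ 2 ∧ M * r < r ^ 2 + b ∧ 0 < r) ∧ r < 1 := by
    have hnear : ∀ᶠ r : ℝ in 𝓝 1, b < r ^ 2 ∧ M * r < r ^ 2 + b ∧ 0 < r :=
      (ContinuousAt.eventually_lt (by fun_prop) (by fun_prop) (by simpa)).and
        ((ContinuousAt.eventually_lt (by fun_prop) (by fun_prop) (by simpa)).and
          (lt_mem_nhds one_pos))
    exact ((hnear.filter_mono nhdsWithin_le_nhds).and (self_mem_nhdsWithin (s := Iio 1))).exists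
  have hgap : 0 < r ^ 2 + b - M * r := sub_pos.2 hMr
  refine ⟨|r ^ 2 + b + M * r| / r ^ 2 / (r ^ 2 + b - M * r), r ^ 2,
    by positivity, by positivity, pow_lt_one₀ hr0.le hr1 two_ne_zero, fun {a} ha {u} hu n => ?_⟩
  have har : |a| * r ≤ M * r := by gcongr
  have hinit : u 0 ^ 2 + (u 1 / r) ^ 2 ≤ (u 0 ^ 2 + u 1 ^ 2) / r ^ 2 := by
    rw [add_div, div_pow]
    gcongr
    exact le_div_self (sq_nonneg _) (by positivity) (pow_le_one₀ hr0.le hr1.le)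
  rw [div_mul_eq_mul_div, div_mul_eq_mul_div, le_div_iff₀' hgap]
  calc (r ^ 2 + b - M * r) * u n ^ 2 ≤ (r ^ 2 + b - |a| * r) * u n ^ 2 := by gcongr
    _ ≤ (r ^ 2 + b + |a| * r) * (u 0 ^ 2 + (u 1 / r) ^ 2) * (r ^ 2) ^ n :=
        sq_le_mul_pow_of_recurrence hu hr0 hbr.le (har.trans hMr.le) n
    _ ≤ |r ^ 2 + b + M * r| * ((u 0 ^ 2 + u 1 ^ 2) / r ^ 2) * (r ^ 2) ^ n := by
        gcongr
        exact le_abs.2 (.inl (by gcongr))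
    _ = |r ^ 2 + b + M * r| / r ^ 2 * (u 0 ^ 2 + u 1 ^ 2) * (r ^ 2) ^ n := by ring

end Recurrence

/-- The larger root of the characteristic polynomial `t ^ 2 - a * t + b` of the recurrence
`u (n + 2) = a * u (n + 1) - b * u n`. It is the root only where `4 * b ≤ a ^ 2`. -/
noncomputable def dominantRoot (a b : ℝ) : ℝ := (a + √(a ^ 2 - 4 * b)) / 2

/-- The smaller root of the characteristic polynomial `t ^ 2 - a * t + b` of the recurrence
`u (n + 2) = a * u (n + 1) - b * u n`. It is the root only where `4 * b ≤ a ^ 2`. -/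
noncomputable def recessiveRoot (a b : ℝ) : ℝ := (a - √(a ^ 2 - 4 * b)) / 2

section CharacteristicRoots

variable {a b : ℝ}

theorem dominantRoot_add_recessiveRoot : dominantRoot a b + recessiveRoot a b = a := by
  rw [dominantRoot, recessiveRoot]
  ring

theorem dominantRoot_mul_recessiveRoot (h : 4 * b ≤ a ^ 2) :
    dominantRoot a b * recessiveRoot a b = b := by
  rw [dominantRoot, recessiveRoot]
  linear_combination -(Real.sq_sqrt (sub_nonneg.2 h)) / 4

theorem abs_recessiveRoot_le_dominantRoot (ha : 0 ≤ a) :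
    |recessiveRoot a b| ≤ dominantRoot a b := by
  rw [dominantRoot, recessiveRoot, abs_le]
  constructor <;> linarith [Real.sqrt_nonneg (a ^ 2 - 4 * b)]

theorem recessiveRoot_lt_dominantRoot (h : 4 * b < a ^ 2) :
    recessiveRoot a b < dominantRoot a b := by
  rw [dominantRoot, recessiveRoot]
  linarith [Real.sqrt_pos.2 (sub_pos.2 h)]

theorem sqrt_one_add_sq_sub_four_mul (hb : b ≤ 1) : √((1 + b) ^ 2 - 4 * b) = 1 - b := by
  rw [show (1 + b) ^ 2 - 4 * b = (1 - b) ^ 2 by ring, Real.sqrt_sq (sub_nonneg.2 hb)]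

theorem dominantRoot_one_add (hb : b ≤ 1) : dominantRoot (1 + b) b = 1 := by
  rw [dominantRoot, sqrt_one_add_sq_sub_four_mul hb]
  ring

theorem recessiveRoot_one_add (hb : b ≤ 1) : recessiveRoot (1 + b) b = b := by
  rw [recessiveRoot, sqrt_one_add_sq_sub_four_mul hb]
  ring

theorem hasDerivAt_dominantRoot_one_add (hb : b < 1) :
    HasDerivAt (dominantRoot · b) (1 - b)⁻¹ (1 + b) := by
  have hb' : 0 < 1 - b := sub_pos.2 hb
  have hdisc : HasDerivAt (fun a : ℝ => a ^ 2 - 4 * b) (2 * (1 + b)) (1 + b) := by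
    simpa using ((hasDerivAt_id (1 + b)).pow 2).sub_const (4 * b)
  have hsqrt := hdisc.sqrt (by rw [show (1 + b) ^ 2 - 4 * b = (1 - b) ^ 2 by ring]; positivity)
  rw [sqrt_one_add_sq_sub_four_mul hb.le] at hsqrt
  refine (((hasDerivAt_id (1 + b)).add hsqrt).div_const 2).congr_deriv ?_
  field_simp
  ring

end CharacteristicRoots

/-- The residual polynomials of the Heavy Ball method with learning rate `α` and momentum `β`, as
functions of the eigenvalue `l`. -/
noncomputable def heavyBallResidual (α β : ℝ) : ℕ → ℝ → ℝ
  | 0, _ => 1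
  | 1, l => 1 - α * l
  | n + 2, l => (1 - α * l) * heavyBallResidual α β (n + 1) l +
      β * (heavyBallResidual α β (n + 1) l - heavyBallResidual α β n l)

section HeavyBall

variable {α β : ℝ}

theorem eq_heavyBallResidual {q : ℕ → ℝ → ℝ} (hq0 : ∀ l, q 0 l = 1)
    (hq1 : ∀ l, q 1 l = 1 - α * l)
    (hqrec : ∀ n : ℕ, 1 ≤ n → ∀ l,
      q (n + 1) l = (1 - α * l) * q n l + β * (q n l - q (n - 1) l)) :
    q = heavyBallResidual α β := by
  ext n l
  induction n using Nat.twoStepInduction with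
  | zero => exact hq0 l
  | one => exact hq1 l
  | more n ih₀ ih₁ =>
    rw [hqrec (n + 1) n.succ_pos, Nat.add_sub_cancel, ih₀, ih₁, heavyBallResidual]

theorem heavyBallResidual_add_two (n : ℕ) (l : ℝ) :
    heavyBallResidual α β (n + 2) l =
      (1 + β - α * l) * heavyBallResidual α β (n + 1) l - β * heavyBallResidual α β n l := by
  rw [heavyBallResidual]
  ring

theorem continuous_heavyBallResidual (n : ℕ) : Continuous (heavyBallResidual α β n) := by
  induction n using Nat.twoStepInduction with
  | zero => exact continuous_const
  | one => exact continuous_const.sub (continuous_const_mul α)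
  | more n ih₀ ih₁ =>
    refine Continuous.congr ?_ fun l => (heavyBallResidual_add_two n l).symm
    fun_prop

theorem eventually_heavyBallResidual_mem_Icc_dominantRoot_pow (hβ0 : -1 < β) (hβ1 : β < 1) {K : ℝ}
    (hK : 1 < K) :
    ∀ᶠ l in 𝓝 0, ∀ n, heavyBallResidual α β n l ∈
      Icc (K⁻¹ * dominantRoot (1 + β - α * l) β ^ n) (K * dominantRoot (1 + β - α * l) β ^ n) := by
  set z : ℝ → ℝ := fun l => dominantRoot (1 + β - α * l) β with hz
  set w : ℝ → ℝ := fun l => recessiveRoot (1 + β - α * l) β with hw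
  have hzc : Continuous z := by unfold z dominantRoot; fun_prop
  have hwc : Continuous w := by unfold w recessiveRoot; fun_prop
  have hz0 : z 0 = 1 := by simp [hz, dominantRoot_one_add hβ1.le]
  have hw0 : w 0 = β := by simp [hw, recessiveRoot_one_add hβ1.le]
  have hβ : 0 < 1 - β := sub_pos.2 hβ1
  have hdisc : ∀ᶠ l in 𝓝 0, 4 * β < (1 + β - α * l) ^ 2 :=
    ContinuousAt.eventually_lt (by fun_prop) (by fun_prop) (by nlinarith)
  have ha : ∀ᶠ l in 𝓝 0, 0 < 1 + β - α * l :=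
    ContinuousAt.eventually_lt (by fun_prop) (by fun_prop) (by linarith)
  have hlo : ∀ᶠ l in 𝓝 0, K⁻¹ * (z l - w l) + |1 - α * l - z l * 1| < 1 - α * l - w l * 1 := by
    refine ContinuousAt.eventually_lt (by fun_prop) (by fun_prop) ?_
    simpa [hz0, hw0] using mul_lt_of_lt_one_left hβ (inv_lt_one_of_one_lt₀ hK)
  have hhi : ∀ᶠ l in 𝓝 0, 1 - α * l - w l * 1 + |1 - α * l - z l * 1| < K * (z l - w l) := by
    refine ContinuousAt.eventually_lt (by fun_prop) (by fun_prop) ?_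
    simpa [hz0, hw0] using lt_mul_of_one_lt_left hβ hK
  filter_upwards [hdisc, ha, hlo, hhi] with l hdisc ha hlo hhi n
  refine mem_Icc_pow_of_recurrence (u := fun n => heavyBallResidual α β n l) (fun n => ?_)
    (abs_recessiveRoot_le_dominantRoot ha.le) (recessiveRoot_lt_dominantRoot hdisc) hlo.le hhi.le n
  rw [dominantRoot_add_recessiveRoot, dominantRoot_mul_recessiveRoot hdisc.le]
  exact heavyBallResidual_add_two n l

theorem eventually_heavyBallResidual_mem_Icc_exp (hβ0 : -1 < β) (hβ1 : β < 1) {K κ₁ κ₂ : ℝ}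
    (hK : 1 < K) (hκ₁ : κ₁ < α / (1 - β)) (hκ₂ : α / (1 - β) < κ₂) :
    ∀ᶠ l in 𝓝[≥] 0, ∀ n : ℕ, heavyBallResidual α β n l ∈
      Icc (K⁻¹ * Real.exp (-(κ₂ * n * l))) (K * Real.exp (-(κ₁ * n * l))) := by
  have hroot : HasDerivAt (fun l => dominantRoot (1 + β - α * l) β) (-(α / (1 - β))) 0 := by
    have haffine : HasDerivAt (fun l : ℝ => 1 + β - α * l) (-α) 0 := by
      simpa using ((hasDerivAt_id (0 : ℝ)).const_mul α).const_sub (1 + β)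
    have hcomp := HasDerivAt.comp (h₂ := (dominantRoot · β)) 0
      (by simpa using hasDerivAt_dominantRoot_one_add hβ1) haffine
    exact hcomp.congr_deriv (by ring)
  have hroot0 : dominantRoot (1 + β - α * 0) β = 1 := by simp [dominantRoot_one_add hβ1.le]
  filter_upwards [eventually_mem_Icc_exp_of_hasDerivAt hroot0 hroot (neg_lt_neg hκ₂)
      (neg_lt_neg hκ₁),
    nhdsWithin_le_nhds (eventually_heavyBallResidual_mem_Icc_dominantRoot_pow hβ0 hβ1 hK)]
    with l hz hq n
  have hexp (κ : ℝ) : Real.exp (-(κ * n * l)) = Real.exp (-κ * l) ^ n := by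
    rw [← Real.exp_nat_mul]
    ring_nf
  have hz0 := (Real.exp_pos _).le.trans hz.1
  rw [hexp, hexp]
  refine Icc_subset_Icc ?_ ?_ (hq n) <;> gcongr
  exacts [hz.1, hz.2]

theorem eventually_heavyBallResidual_sq_mem_Icc_exp (hα : 0 < α) (hβ0 : -1 < β) (hβ1 : β < 1)
    {θ : ℝ} (hθ : 1 < θ) :
    ∀ᶠ l in 𝓝[≥] 0, ∀ n : ℕ, heavyBallResidual α β n l ^ 2 ∈
      Icc (θ⁻¹ * Real.exp (-(θ * (2 * α / (1 - β)) * n * l)))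
        (θ * Real.exp (-(θ⁻¹ * (2 * α / (1 - β)) * n * l))) := by
  have hκ : 0 < α / (1 - β) := div_pos hα (sub_pos.2 hβ1)
  have hsq (K κ l : ℝ) (n : ℕ) : (K * Real.exp (-(κ * (α / (1 - β)) * n * l))) ^ 2 =
      K ^ 2 * Real.exp (-(κ * (2 * α / (1 - β)) * n * l)) := by
    rw [mul_pow, ← Real.exp_nat_mul]
    push_cast
    ring_nf
  filter_upwards [eventually_heavyBallResidual_mem_Icc_exp hβ0 hβ1
    (Real.lt_sqrt_of_sq_lt (by simpa using hθ) : 1 < √θ)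
    (mul_lt_of_lt_one_left hκ (inv_lt_one_of_one_lt₀ hθ)) (lt_mul_of_one_lt_left hκ hθ)]
    with l hl n
  have hpos : 0 ≤ (√θ)⁻¹ * Real.exp (-(θ * (α / (1 - β)) * n * l)) := by positivity
  have hlo := pow_le_pow_left₀ hpos (hl n).1 2
  have hhi := pow_le_pow_left₀ (hpos.trans (hl n).1) (hl n).2 2
  rw [hsq, inv_pow, Real.sq_sqrt (by positivity)] at hlo
  rw [hsq, Real.sq_sqrt (by positivity)] at hhi
  exact ⟨hlo, hhi⟩

theorem exists_heavyBallResidual_sq_le_mul_pow (hβ1 : β < 1) {M : ℝ} (hM : M < 1 + β) :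
    ∃ C r : ℝ, 0 ≤ r ∧ r < 1 ∧
      ∀ l, |1 + β - α * l| ≤ M → ∀ n, heavyBallResidual α β n l ^ 2 ≤ C * r ^ n := by
  obtain ⟨C, r, hC, hr0, hr1, hbound⟩ := exists_sq_le_mul_pow_of_recurrence hβ1 hM
  refine ⟨C * (1 + (M + |β|) ^ 2), r, hr0, hr1, fun l hl n => ?_⟩
  refine (hbound hl (u := fun n => heavyBallResidual α β n l)
    (heavyBallResidual_add_two · l) n).trans ?_
  have hq1 : |1 - α * l| ≤ M + |β| := by
    calc |1 - α * l| = |1 + β - α * l - β| := by ring_nf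
      _ ≤ |1 + β - α * l| + |β| := abs_sub _ _
      _ ≤ M + |β| := by gcongr
  simp only [heavyBallResidual, one_pow]
  have := sq_le_sq' (abs_le.1 hq1).1 (abs_le.1 hq1).2
  gcongr

theorem exists_heavyBallResidual_sq_le_mul_pow_of_mem_Icc (hα : 0 < α) (hβ1 : β < 1) {δ Λ : ℝ}
    (hδ : 0 < δ) (hαΛ : α * Λ < 2 * (1 + β)) :
    ∃ C r : ℝ, 0 ≤ r ∧ r < 1 ∧
      ∀ l ∈ Icc δ Λ, ∀ n, heavyBallResidual α β n l ^ 2 ≤ C * r ^ n := by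
  obtain ⟨C, r, hr0, hr1, hC⟩ := exists_heavyBallResidual_sq_le_mul_pow (α := α) hβ1
    (max_lt (sub_lt_self (1 + β) (mul_pos hα hδ)) (by linarith : α * Λ - (1 + β) < 1 + β))
  refine ⟨C, r, hr0, hr1, fun l hl n => hC l ?_ n⟩
  refine abs_le'.2 ⟨le_max_of_le_left ?_, le_max_of_le_right ?_⟩
  · gcongr
    exact hl.1
  · rw [neg_sub]
    gcongr
    exact hl.2

end HeavyBall

theorem hb_constant_rate_loss_asymptotic_general {ζ c α β Λ : ℝ} (hζ : 0 ≤ ζ) (hβ : β < 1)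
    (hα : 0 < α) (hΛ : 0 < Λ) (hαΛ : α * Λ < 2 * (1 + β)) {ρ : Measure ℝ}
    [IsLocallyFiniteMeasure ρ]
    (hlim : Tendsto (fun l => ρ.real (Icc 0 l) / l ^ ζ) (𝓝[>] 0) (𝓝 c)) :
    Tendsto (fun n : ℕ => (2 * α * n / (1 - β)) ^ ζ *
      (1 / 2 * ∫ l in Icc 0 Λ, heavyBallResidual α β n l ^ 2 ∂ρ))
      atTop (𝓝 (c * Real.Gamma (ζ + 1) / 2)) := by
  have hβ0 : -1 < β := by linarith [mul_pos hα hΛ]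
  have : Fact (ρ (Icc 0 Λ) < ⊤) := ⟨isCompact_Icc.measure_lt_top⟩
  have hmem : ∀ᵐ l ∂ρ.restrict (Icc 0 Λ), l ∈ Icc 0 Λ := ae_restrict_mem measurableSet_Icc
  have hlim' : Tendsto (fun l => (ρ.restrict (Icc 0 Λ)).real (Iic l) / l ^ ζ) (𝓝[>] 0) (𝓝 c) := by
    refine hlim.congr' ?_
    filter_upwards [Ioo_mem_nhdsGT hΛ] with l hl
    have hinter : Iic l ∩ Icc 0 Λ = Icc 0 l := by
      rw [← Ici_inter_Iic, inter_left_comm, Iic_inter_Iic, min_eq_left hl.2.le, Ici_inter_Iic]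
    rw [measureReal_restrict_apply measurableSet_Iic, hinter]
  have hfar (δ : ℝ) (hδ : 0 < δ) : ∃ C r : ℝ, 0 ≤ r ∧ r < 1 ∧ ∀ᵐ l ∂ρ.restrict (Icc 0 Λ),
      δ ≤ l → ∀ n, |heavyBallResidual α β n l ^ 2| ≤ C * r ^ n := by
    obtain ⟨C, r, hr0, hr1, hC⟩ := exists_heavyBallResidual_sq_le_mul_pow_of_mem_Icc hα hβ hδ hαΛ
    refine ⟨C, r, hr0, hr1, hmem.mono fun l hl hδl n => ?_⟩
    rw [abs_sq]
    exact hC l ⟨hδl, hl.2⟩ n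
  have hint (n : ℕ) : IntegrableOn (fun l => heavyBallResidual α β n l ^ 2) (Icc 0 Λ) ρ :=
    ((continuous_heavyBallResidual n).pow 2).integrableOn_Icc
  have hmain := tendsto_rpow_mul_integral_of_exp_sandwich (hmem.mono fun l hl => hl.1) hζ hlim'
    (div_pos (by positivity) (sub_pos.2 hβ) : 0 < 2 * α / (1 - β)) hint
    (fun θ hθ => eventually_heavyBallResidual_sq_mem_Icc_exp hα hβ0 hβ hθ) hfar
  refine (hmain.div_const 2).congr fun n => ?_
  rw [div_mul_eq_mul_div]
  ring

/-- Heavy Ball with constant learning rate `α` and momentum `β`: under the exact power-law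
spectral asymptotic `ρ([0,λ]) ~ λ^ζ` as `λ → 0+`, the loss
`L_n = (1/2)∫ q_n(λ)² ρ(dλ)` satisfies `(2αn/(1-β))^ζ L_n → Γ(ζ+1)/2`. -/
theorem hb_constant_rate_loss_asymptotic
    (ζ α β : ℝ) (hζ : 0 < ζ) (hβ0 : 0 < β) (hβ1 : β < 1)
    (hα0 : 0 < α) (hα : α < 2 * (1 + β))
    (ρ : Measure ℝ) [IsFiniteMeasure ρ]
    (hsupp : ρ (Set.Icc (0:ℝ) 1)ᶜ = 0)
    (hlim : Tendsto (fun l : ℝ => (ρ (Set.Icc 0 l)).toReal / l ^ ζ)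
      (nhdsWithin 0 (Set.Ioi 0)) (nhds 1))
    (q : ℕ → ℝ → ℝ)
    (hq0 : ∀ l, q 0 l = 1)
    (hq1 : ∀ l, q 1 l = 1 - α * l)
    (hqrec : ∀ n : ℕ, 1 ≤ n → ∀ l,
      q (n + 1) l = (1 - α * l) * q n l + β * (q n l - q (n - 1) l)) :
    Tendsto (fun n : ℕ =>
        (2 * α * n / (1 - β)) ^ ζ * ((1/2) * ∫ l in Set.Icc (0:ℝ) 1, (q n l) ^ 2 ∂ρ))
      atTop (nhds (Real.Gamma (ζ + 1) / 2)) := by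
  obtain rfl := eq_heavyBallResidual hq0 hq1 hqrec
  simpa using hb_constant_rate_loss_asymptotic_general hζ.le hβ1 hα0 one_pos (by simpa) hlim
end

section
/- Let ζ>0 and a > max(0, ζ-1/2). Let ρ be a finite Borel measure on ℝ supported on [0,1] with ρ({0})=0 and ρ((0,λ]) ≤ λ^ζ for all λ ∈ [0,1]. Define, for n ≥ 0, α_n = (2n+a+1)(2n+a+2)/(2(n+a+1)²) and β_n = n²(2n+a+2)/((n+a+1)²(2n+a)), and define polynomials q_n by q_0=1, q_1(λ)=1-α_0λ, q_{n+1}(λ) = (1-α_nλ)q_n(λ) + β_n(q_n(λ)-q_{n-1}(λ)) for n ≥ 1. Set S(ζ,a) = ((4a+5)²/2)^ζ · [1 + (ζ/(a+1/2-ζ)) · 2^{2a+2}Γ(a+1)²/(π(4a+5)^{2a+1})]. Then there exists C > 0 such that for all n ≥ 1, (1/2)∫_{[0,1]} q_n(λ)² ρ(dλ) ≤ (1/2)·S(ζ,a)·n^{-2ζ}·(1 + C/n). -/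
open MeasureTheory Filter Set

open scoped Topology

/-!
After `t = l / 2`, the residual polynomial `q n` is the normalized shifted Jacobi polynomial
`Q n`, orthogonal on `[0, 1]` for the weight `t ^ a`. In the variable `t = sin² x` the Liouville
transform `y` of `Q n` is a perturbed harmonic oscillator whose frequency `ω` grows linearly
in `n`. A virial identity, together with the exact values of the `L²` norm and of `Q n 1`, gives
the asymptotics of the energy of `y` at `x = π / 4`, and Grönwall's inequality carries this
energy down to `x ∼ 1 / n`. This bounds `Q n t ^ 2` by a multiple of `(n² t) ^ (-(a + 1/2))` for
`t ≳ 1 / n²`, while a Sonine function gives `Q n t ^ 2 ≤ 1` for smaller `t`.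
The resulting antitone envelope is integrated by stochastic dominance: under
`ρ ((0, l]) ≤ l ^ ζ` its integral is at most that against `ζ * l ^ (ζ - 1) dl`.
-/

section Polynomials

open Polynomial

/-- `2 α_n`, where `α_n` is the step size of the schedule: the factor `2` comes from the change of
variables `t = λ / 2`. -/
noncomputable def jacobiStep (a : ℝ) (n : ℕ) : ℝ :=
  (2 * n + a + 1) * (2 * n + a + 2) / (n + a + 1) ^ 2

/-- The momentum `β_n` of the schedule. -/
noncomputable def jacobiMomentum (a : ℝ) (n : ℕ) : ℝ :=
  n ^ 2 * (2 * n + a + 2) / ((n + a + 1) ^ 2 * (2 * n + a))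

/-- The shifted Jacobi polynomial `P_n^{(a,0)}(1 - 2t) / P_n^{(a,0)}(1)`, an orthogonal polynomial
for the weight `t ^ a` on `[0, 1]`, encoded by its three-term recurrence. -/
noncomputable def shiftedJacobi (a : ℝ) : ℕ → ℝ[X]
  | 0 => 1
  | 1 => 1 - C (jacobiStep a 0) * X
  | n + 2 => (1 - C (jacobiStep a (n + 1)) * X) * shiftedJacobi a (n + 1) +
      C (jacobiMomentum a (n + 1)) * (shiftedJacobi a (n + 1) - shiftedJacobi a n)

theorem shiftedJacobi_succ (a : ℝ) : ∀ k, shiftedJacobi a (k + 1) =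
    (1 - C (jacobiStep a k) * X) * shiftedJacobi a k +
      C (jacobiMomentum a k) * (shiftedJacobi a k - shiftedJacobi a (k - 1))
  | 0 => by simp [shiftedJacobi]
  | _ + 1 => by rw [shiftedJacobi, Nat.add_sub_cancel]

variable {a : ℝ}

theorem shiftedJacobi_one (ha : -1 < a) :
    C (a + 1) * shiftedJacobi a 1 = C (a + 1) - C (a + 2) * X := by
  have h : (a + 1) * jacobiStep a 0 = a + 2 := by
    have : a + 1 ≠ 0 := by linarith
    simp only [jacobiStep, Nat.cast_zero, mul_zero, zero_add]
    field_simp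
  rw [shiftedJacobi, ← h, C_mul]
  ring

theorem shiftedJacobi_add_two (ha : -1 < a) (k : ℕ) :
    C ((k + a + 2) ^ 2 * (2 * k + a + 2)) * shiftedJacobi a (k + 2) =
      (C ((k + a + 2) ^ 2 * (2 * k + a + 2) + (k + 1) ^ 2 * (2 * k + a + 4)) -
        C ((2 * k + a + 2) * (2 * k + a + 3) * (2 * k + a + 4)) * X) * shiftedJacobi a (k + 1) -
      C ((k + 1) ^ 2 * (2 * k + a + 4)) * shiftedJacobi a k := by
  have : (0 : ℝ) ≤ k := k.cast_nonneg
  have h₁ : (k : ℝ) + 1 + a + 1 ≠ 0 := by linarith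
  have h₂ : 2 * ((k : ℝ) + 1) + a ≠ 0 := by linarith
  have hstep : (k + a + 2) ^ 2 * jacobiStep a (k + 1) = (2 * k + a + 3) * (2 * k + a + 4) := by
    simp only [jacobiStep, Nat.cast_add, Nat.cast_one]
    field_simp
    ring
  have hmomentum : (k + a + 2) ^ 2 * (2 * k + a + 2) * jacobiMomentum a (k + 1) =
      (k + 1) ^ 2 * (2 * k + a + 4) := by
    simp only [jacobiMomentum, Nat.cast_add, Nat.cast_one]
    field_simp
    ring
  rw [shiftedJacobi, mul_assoc (2 * (k : ℝ) + a + 2), ← hstep, ← hmomentum]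
  simp only [C_mul, C_add]
  ring

theorem derivative_shiftedJacobi_add_two (ha : -1 < a) (k : ℕ) :
    C ((k + a + 2) ^ 2 * (2 * k + a + 2)) * derivative (shiftedJacobi a (k + 2)) =
      (C ((k + a + 2) ^ 2 * (2 * k + a + 2) + (k + 1) ^ 2 * (2 * k + a + 4)) -
        C ((2 * k + a + 2) * (2 * k + a + 3) * (2 * k + a + 4)) * X) *
          derivative (shiftedJacobi a (k + 1)) -
      C ((2 * k + a + 2) * (2 * k + a + 3) * (2 * k + a + 4)) * shiftedJacobi a (k + 1) -
      C ((k + 1) ^ 2 * (2 * k + a + 4)) * derivative (shiftedJacobi a k) := by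
  have h := congrArg derivative (shiftedJacobi_add_two ha k)
  simp only [derivative_mul, derivative_sub, derivative_C, derivative_X] at h
  linear_combination h

theorem shiftedJacobi_lowering_of_raising (ha : -1 < a) {k : ℕ}
    (hraise : C (2 * k + a + 2) * X * (1 - X) * derivative (shiftedJacobi a (k + 1)) =
      C (k + 1 : ℝ) * ((C (k + 1 : ℝ) - C (2 * k + a + 2) * X) * shiftedJacobi a (k + 1) -
        C (k + 1 : ℝ) * shiftedJacobi a k)) :
    C (2 * (k + 1) + a + 2) * X * (1 - X) * derivative (shiftedJacobi a (k + 1)) =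
      C (k + 1 + a + 1) * ((C (2 * (k + 1) + a + 2) * X - C (k + 1 + a + 1)) *
        shiftedJacobi a (k + 1) + C (k + 1 + a + 1) * shiftedJacobi a (k + 2)) := by
  have h : C (2 * k + a + 2) ≠ 0 := C_ne_zero.2 (by linarith [k.cast_nonneg (α := ℝ)])
  have hQ := shiftedJacobi_add_two ha k
  apply mul_left_cancel₀ h
  simp only [C_add, C_mul, C_pow, C_1, map_ofNat] at hraise hQ ⊢
  linear_combination (2 * C (k : ℝ) + C a + 4) * hraise - hQ

theorem shiftedJacobi_raising_and_lowering (ha : -1 < a) (k : ℕ) :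
    C (2 * k + a + 2) * X * (1 - X) * derivative (shiftedJacobi a (k + 1)) =
      C (k + 1 : ℝ) * ((C (k + 1 : ℝ) - C (2 * k + a + 2) * X) * shiftedJacobi a (k + 1) -
        C (k + 1 : ℝ) * shiftedJacobi a k) ∧
    C (2 * k + a + 2) * X * (1 - X) * derivative (shiftedJacobi a k) =
      C (k + a + 1) * ((C (2 * k + a + 2) * X - C (k + a + 1)) * shiftedJacobi a k +
        C (k + a + 1) * shiftedJacobi a (k + 1)) := by
  induction k with
  | zero =>
    have hQ := shiftedJacobi_one ha
    have hD := congrArg derivative hQ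
    simp only [derivative_mul, derivative_sub, derivative_C, derivative_X] at hD
    have h : C (a + 1) ≠ 0 := C_ne_zero.2 (by linarith)
    simp only [Nat.cast_zero, mul_zero, zero_add, shiftedJacobi.eq_1, derivative_one, C_1]
    constructor
    · apply mul_left_cancel₀ h
      simp only [C_add, C_1, map_ofNat] at hQ hD ⊢
      linear_combination (C a + 2) * X * (1 - X) * hD - (1 - (C a + 2) * X) * hQ
    · linear_combination -C (a + 1) * hQ
  | succ k ih =>
    obtain ⟨hraise, hlower⟩ := ih
    have hQ := shiftedJacobi_add_two ha k
    have hD := derivative_shiftedJacobi_add_two ha k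
    have : (0 : ℝ) ≤ k := k.cast_nonneg
    have h₁ : C (k + a + 2) ≠ 0 := C_ne_zero.2 (by linarith)
    have h₂ : C (2 * k + a + 2) ≠ 0 := C_ne_zero.2 (by linarith)
    have hlower' := shiftedJacobi_lowering_of_raising ha hraise
    push_cast
    refine ⟨?_, hlower'⟩
    apply mul_left_cancel₀ (mul_ne_zero (mul_ne_zero (pow_ne_zero 2 h₁) h₂) h₂)
    simp only [C_add, C_mul, C_pow, C_1, map_ofNat] at hlower hlower' hQ hD ⊢
    set κ : ℝ[X] := C (k : ℝ)
    set α : ℝ[X] := C a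
    linear_combination (2 * κ + α + 2) * (2 * κ + α + 4) * X * (1 - X) * hD +
      (2 * κ + α + 2) * ((κ + α + 2) ^ 2 * (2 * κ + α + 2)
        - (2 * κ + α + 3) * (2 * κ + α + 4) * (2 * κ + α + 2) * X
        + (κ + 1) ^ 2 * (2 * κ + α + 4)) * hlower' -
      (κ + 1) ^ 2 * (2 * κ + α + 4) ^ 2 * hlower +
      (((κ + α + 2) ^ 2 * (2 * κ + α + 2)
        - (2 * κ + α + 3) * (2 * κ + α + 4) * (2 * κ + α + 2) * X
        + (κ + 1) ^ 2 * (2 * κ + α + 4)) -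
        (2 * κ + α + 2) * (κ + 2) * (κ + 2 - (2 * κ + α + 4) * X)) * hQ

theorem shiftedJacobi_differential_equation (ha : -1 < a) (n : ℕ) :
    X * (1 - X) * derivative (derivative (shiftedJacobi a n)) +
      (C (a + 1) - C (a + 2) * X) * derivative (shiftedJacobi a n) +
      C (n * (n + a + 1)) * shiftedJacobi a n = 0 := by
  obtain ⟨hraise, hlower⟩ := shiftedJacobi_raising_and_lowering ha n
  have hD := congrArg derivative hlower
  simp only [derivative_mul, derivative_add, derivative_sub, derivative_C, derivative_one,
    derivative_X] at hD
  have hC : C (2 * n + a + 2) ≠ 0 := C_ne_zero.2 (by linarith [n.cast_nonneg (α := ℝ)])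
  have hX : (X * (1 - X) : ℝ[X]) ≠ 0 :=
    mul_ne_zero X_ne_zero (sub_ne_zero.2 fun h => X_ne_C 1 h.symm)
  apply mul_left_cancel₀ (mul_ne_zero hC (mul_ne_zero hC hX))
  simp only [C_add, C_mul, C_1, map_ofNat] at hraise hlower hD ⊢
  linear_combination (2 * C (n : ℝ) + C a + 2) * X * (1 - X) * hD +
    (C (n : ℝ) + C a + 1) ^ 2 * hraise -
    (C (n : ℝ) + 1) * (C (n : ℝ) + 1 - (2 * C (n : ℝ) + C a + 2) * X) * hlower

theorem eval_shiftedJacobi_differential_equation (ha : -1 < a) (n : ℕ) (t : ℝ) :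
    t * (1 - t) * (derivative (derivative (shiftedJacobi a n))).eval t +
      (a + 1 - (a + 2) * t) * (derivative (shiftedJacobi a n)).eval t +
      n * (n + a + 1) * (shiftedJacobi a n).eval t = 0 := by
  simpa only [eval_add, eval_sub, eval_mul, eval_C, eval_X, eval_one, eval_zero] using
    congrArg (eval t) (shiftedJacobi_differential_equation ha n)

theorem shiftedJacobi_eval_zero (a : ℝ) : ∀ n, (shiftedJacobi a n).eval 0 = 1
  | 0 => by simp [shiftedJacobi]
  | 1 => by simp [shiftedJacobi]
  | n + 2 => by
    simp [shiftedJacobi, shiftedJacobi_eval_zero a (n + 1), shiftedJacobi_eval_zero a n]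

theorem eval_half_shiftedJacobi_eq {q : ℕ → ℝ → ℝ} (hq0 : ∀ l, q 0 l = 1)
    (hq1 : ∀ l, q 1 l = 1 - jacobiStep a 0 / 2 * l)
    (hqrec : ∀ n : ℕ, 1 ≤ n → ∀ l, q (n + 1) l =
      (1 - jacobiStep a n / 2 * l) * q n l + jacobiMomentum a n * (q n l - q (n - 1) l)) (l : ℝ) :
    ∀ n, (shiftedJacobi a n).eval (l / 2) = q n l
  | 0 => by simp [shiftedJacobi, hq0]
  | 1 => by
    simp only [shiftedJacobi, hq1, eval_sub, eval_one, eval_mul, eval_C, eval_X]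
    ring
  | n + 2 => by
    simp only [shiftedJacobi, eval_add, eval_sub, eval_one, eval_mul, eval_C, eval_X,
      eval_half_shiftedJacobi_eq hq0 hq1 hqrec l (n + 1),
      eval_half_shiftedJacobi_eq hq0 hq1 hqrec l n,
      hqrec (n + 1) n.succ_pos, Nat.add_sub_cancel]
    ring

theorem hasDerivAt_sonine (ha : -1 < a) (n : ℕ) (t : ℝ) :
    HasDerivAt (fun s => n * (n + a + 1) * (shiftedJacobi a n).eval s ^ 2 +
        s * (1 - s) * (derivative (shiftedJacobi a n)).eval s ^ 2)
      (-((2 * a + 1 - (2 * a + 2) * t) * (derivative (shiftedJacobi a n)).eval t ^ 2)) t := by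
  have hQ := ((shiftedJacobi a n).hasDerivAt t).pow 2
  have hD := ((derivative (shiftedJacobi a n)).hasDerivAt t).pow 2
  have hX := (hasDerivAt_id' t).mul ((hasDerivAt_id' t).const_sub 1)
  refine ((hQ.const_mul (n * (n + a + 1))).add (hX.mul hD)).congr_deriv ?_
  have hode := eval_shiftedJacobi_differential_equation ha n t
  simp only [Pi.mul_apply, Pi.pow_apply]
  linear_combination 2 * (derivative (shiftedJacobi a n)).eval t * hode

theorem sq_eval_shiftedJacobi_le_one (ha : -1 < a) (n : ℕ) {t : ℝ} (ht : 0 ≤ t)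
    (hta : (2 * a + 2) * t ≤ 2 * a + 1) : (shiftedJacobi a n).eval t ^ 2 ≤ 1 := by
  rcases n.eq_zero_or_pos with rfl | hn
  · simp [shiftedJacobi]
  have hn : (1 : ℝ) ≤ n := by exact_mod_cast hn
  have hanti := antitoneOn_of_hasDerivWithinAt_nonpos (convex_Icc 0 t)
    (fun s _ => (hasDerivAt_sonine ha n s).continuousAt.continuousWithinAt)
    (fun s _ => (hasDerivAt_sonine ha n s).hasDerivWithinAt) (by
      intro s hs
      rw [interior_Icc] at hs
      have : (2 * a + 2) * s ≤ (2 * a + 2) * t :=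
        mul_le_mul_of_nonneg_left hs.2.le (by linarith)
      exact neg_nonpos.2 (mul_nonneg (by linarith) (sq_nonneg _)))
  have h := hanti (left_mem_Icc.2 ht) (right_mem_Icc.2 ht) ht
  simp only [shiftedJacobi_eval_zero, zero_mul, add_zero, one_pow] at h
  have ht1 : 0 ≤ t * (1 - t) := mul_nonneg ht (by nlinarith)
  have : 0 ≤ t * (1 - t) * (derivative (shiftedJacobi a n)).eval t ^ 2 := by positivity
  have hn' : 0 < n * (n + a + 1) := mul_pos (by linarith) (by linarith)
  exact le_of_mul_le_mul_left (by linarith) hn'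

theorem intervalIntegrable_rpow_mul (ha : -1 < a) {f : ℝ → ℝ} (hf : Continuous f) (x y : ℝ) :
    IntervalIntegrable (fun t => t ^ a * f t) volume x y :=
  (intervalIntegral.intervalIntegrable_rpow' ha).mul_continuousOn hf.continuousOn

/-- The integral `∫₀¹ t ^ a * p(t) dt` of a polynomial against the orthogonality weight of the
shifted Jacobi polynomials. -/
noncomputable def jacobiIntegral (a : ℝ) (p : ℝ[X]) : ℝ := ∫ t in (0 : ℝ)..1, t ^ a * p.eval t

theorem jacobiIntegral_C_mul (a c : ℝ) (p : ℝ[X]) :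
    jacobiIntegral a (C c * p) = c * jacobiIntegral a p := by
  simp only [jacobiIntegral, eval_C_mul, mul_left_comm, intervalIntegral.integral_const_mul]

theorem jacobiIntegral_sub (ha : -1 < a) (p q : ℝ[X]) :
    jacobiIntegral a (p - q) = jacobiIntegral a p - jacobiIntegral a q := by
  simp only [jacobiIntegral, eval_sub, mul_sub]
  exact intervalIntegral.integral_sub (intervalIntegrable_rpow_mul ha p.continuous 0 1)
    (intervalIntegrable_rpow_mul ha q.continuous 0 1)

theorem hasDerivAt_shiftedJacobi_wronskian (ha : -1 < a) (k m : ℕ) {t : ℝ} (ht : 0 < t) :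
    HasDerivAt (fun s => s ^ (a + 1) * ((1 - s) *
        ((derivative (shiftedJacobi a k)).eval s * (shiftedJacobi a m).eval s -
          (shiftedJacobi a k).eval s * (derivative (shiftedJacobi a m)).eval s)))
      ((m - k) * (m + k + a + 1) *
        (t ^ a * ((shiftedJacobi a k).eval t * (shiftedJacobi a m).eval t))) t := by
  have hpow : HasDerivAt (fun s : ℝ => s ^ (a + 1)) ((a + 1) * t ^ a) t := by
    simpa using Real.hasDerivAt_rpow_const (p := a + 1) (Or.inl ht.ne')
  refine (hpow.mul (((hasDerivAt_id' t).const_sub 1).mul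
    ((((derivative (shiftedJacobi a k)).hasDerivAt t).mul ((shiftedJacobi a m).hasDerivAt t)).sub
      (((shiftedJacobi a k).hasDerivAt t).mul
        ((derivative (shiftedJacobi a m)).hasDerivAt t))))).congr_deriv ?_
  simp only [Pi.mul_apply, Pi.sub_apply, Real.rpow_add_one ht.ne']
  linear_combination t ^ a *
    ((shiftedJacobi a m).eval t * eval_shiftedJacobi_differential_equation ha k t -
      (shiftedJacobi a k).eval t * eval_shiftedJacobi_differential_equation ha m t)

theorem jacobiIntegral_shiftedJacobi_mul_of_ne (ha : -1 < a) {k m : ℕ} (hkm : k ≠ m) :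
    jacobiIntegral a (shiftedJacobi a k * shiftedJacobi a m) = 0 := by
  have hcont : Continuous fun s : ℝ => s ^ (a + 1) * ((1 - s) *
      ((derivative (shiftedJacobi a k)).eval s * (shiftedJacobi a m).eval s -
        (shiftedJacobi a k).eval s * (derivative (shiftedJacobi a m)).eval s)) :=
    (Real.continuous_rpow_const (by linarith)).mul (by fun_prop)
  have h := intervalIntegral.integral_eq_sub_of_hasDerivAt_of_le zero_le_one hcont.continuousOn
    (fun t ht => hasDerivAt_shiftedJacobi_wronskian ha k m ht.1)
    ((intervalIntegrable_rpow_mul ha (by fun_prop) 0 1).const_mul _)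
  rw [intervalIntegral.integral_const_mul, Real.zero_rpow (by linarith), sub_self, zero_mul,
    zero_mul, mul_zero, sub_zero] at h
  have hne : ((m : ℝ) - k) * (m + k + a + 1) ≠ 0 := by
    refine mul_ne_zero (sub_ne_zero.2 (by exact_mod_cast hkm.symm)) (ne_of_gt ?_)
    have : (1 : ℝ) ≤ m + k := by exact_mod_cast (by lia : 1 ≤ m + k)
    linarith
  simpa only [jacobiIntegral, eval_mul] using (mul_eq_zero.1 h).resolve_left hne

/-- The squared norm of the shifted Jacobi polynomial for its orthogonality weight. -/
noncomputable def jacobiNormSq (a : ℝ) (n : ℕ) : ℝ := jacobiIntegral a (shiftedJacobi a n ^ 2)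

theorem jacobiNormSq_eq_neg_jacobiIntegral_X_mul (ha : -1 < a) (k : ℕ) :
    (k + 1) ^ 2 * jacobiNormSq a k = -((2 * k + a + 2) * (2 * k + a + 3) *
      jacobiIntegral a (X * (shiftedJacobi a k * shiftedJacobi a (k + 1)))) := by
  have h := congrArg (fun p => jacobiIntegral a (shiftedJacobi a k * p))
    (shiftedJacobi_add_two ha k)
  simp only [sub_mul, mul_sub, mul_assoc, mul_left_comm (shiftedJacobi a k) (C _),
    mul_left_comm (shiftedJacobi a k) X, ← sq, jacobiIntegral_sub ha, jacobiIntegral_C_mul] at h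
  rw [jacobiIntegral_shiftedJacobi_mul_of_ne ha (by simp),
    jacobiIntegral_shiftedJacobi_mul_of_ne ha (by simp), ← jacobiNormSq] at h
  have hne : 2 * (k : ℝ) + a + 4 ≠ 0 := by linarith [k.cast_nonneg (α := ℝ)]
  apply mul_left_cancel₀ hne
  linear_combination h

theorem jacobiNormSq_succ_eq_neg_jacobiIntegral_X_mul (ha : -1 < a) (k : ℕ) :
    (k + a + 1) ^ 2 * jacobiNormSq a (k + 1) = -((2 * k + a + 1) * (2 * k + a + 2) *
      jacobiIntegral a (X * (shiftedJacobi a k * shiftedJacobi a (k + 1)))) := by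
  have h := congrArg (fun p => jacobiIntegral a (shiftedJacobi a (k + 1) * p))
    (shiftedJacobi_succ a k)
  have hpoly : shiftedJacobi a (k + 1) * ((1 - C (jacobiStep a k) * X) * shiftedJacobi a k +
      C (jacobiMomentum a k) * (shiftedJacobi a k - shiftedJacobi a (k - 1))) =
      C (1 + jacobiMomentum a k) * (shiftedJacobi a k * shiftedJacobi a (k + 1)) -
      C (jacobiStep a k) * (X * (shiftedJacobi a k * shiftedJacobi a (k + 1))) -
      C (jacobiMomentum a k) * (shiftedJacobi a (k - 1) * shiftedJacobi a (k + 1)) := by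
    rw [C_add, C_1]
    ring
  simp only [hpoly, jacobiIntegral_sub ha, jacobiIntegral_C_mul, ← sq] at h
  rw [jacobiIntegral_shiftedJacobi_mul_of_ne ha (by simp),
    jacobiIntegral_shiftedJacobi_mul_of_ne ha (by lia), ← jacobiNormSq, jacobiStep] at h
  have hne : (k : ℝ) + a + 1 ≠ 0 := by linarith [k.cast_nonneg (α := ℝ)]
  rw [h]
  field_simp
  ring

theorem jacobiNormSq_succ (ha : -1 < a) (k : ℕ) :
    (k + 1 + a) ^ 2 * (2 * k + a + 3) * jacobiNormSq a (k + 1) =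
      (k + 1) ^ 2 * (2 * k + a + 1) * jacobiNormSq a k := by
  linear_combination (2 * (k : ℝ) + a + 3) * jacobiNormSq_succ_eq_neg_jacobiIntegral_X_mul ha k -
    (2 * (k : ℝ) + a + 1) * jacobiNormSq_eq_neg_jacobiIntegral_X_mul ha k

/-- The endpoint value `P_n^{(a,0)}(1) = (a + 1)_n / n!`, the factor by which the Jacobi polynomial
is normalized in `shiftedJacobi`. -/
noncomputable def jacobiEndpoint (a : ℝ) (n : ℕ) : ℝ :=
  ∏ i ∈ Finset.range n, ((i : ℝ) + 1 + a) / (i + 1)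

theorem jacobiNormSq_eq (ha : -1 < a) (n : ℕ) :
    (2 * n + a + 1) * jacobiNormSq a n = (jacobiEndpoint a n ^ 2)⁻¹ := by
  induction n with
  | zero =>
    have h : a + 1 ≠ 0 := by linarith
    simp [jacobiNormSq, jacobiIntegral, jacobiEndpoint, shiftedJacobi, integral_rpow (Or.inl ha),
      Real.zero_rpow h, mul_inv_cancel₀ h]
  | succ n ih =>
    have h : (n : ℝ) + 1 + a ≠ 0 := by linarith [n.cast_nonneg (α := ℝ)]
    rw [jacobiEndpoint, Finset.prod_range_succ, ← jacobiEndpoint, mul_pow, mul_inv, ← ih]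
    push_cast
    field_simp
    linear_combination jacobiNormSq_succ ha n

theorem tendsto_rpow_div_jacobiEndpoint (ha : -1 < a) :
    Tendsto (fun n : ℕ => (n : ℝ) ^ a / jacobiEndpoint a n) atTop (𝓝 (Real.Gamma (a + 1))) := by
  have hquot : Tendsto (fun n : ℕ => (a + 1 + (n : ℝ)) / n) atTop (𝓝 1) := by
    simpa using tendsto_add_mul_div_add_mul_atTop_nhds (a + 1) 0 (1 : ℝ) one_ne_zero
  have h := (Real.GammaSeq_tendsto_Gamma (a + 1)).mul hquot
  rw [mul_one] at h
  refine h.congr' ?_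
  filter_upwards [eventually_gt_atTop 0] with n hn
  have hn' : (n : ℝ) ≠ 0 := by positivity
  have hlast : a + 1 + n ≠ 0 := by linarith [n.cast_nonneg (α := ℝ)]
  have hprod : ∏ i ∈ Finset.range n, ((i : ℝ) + 1 + a) = ∏ i ∈ Finset.range n, (a + 1 + (i : ℝ)) :=
    Finset.prod_congr rfl fun i _ => by ring
  have hfactorial : ∏ i ∈ Finset.range n, ((i : ℝ) + 1) = n.factorial := by
    exact_mod_cast Finset.prod_range_add_one_eq_factorial n
  rw [Real.GammaSeq, Finset.prod_range_succ, jacobiEndpoint, Finset.prod_div_distrib, hprod,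
    hfactorial, Real.rpow_add_one hn']
  field_simp

end Polynomials

section Oscillators

/-- `u` is a solution on `s` of the oscillator equation `u'' = -Φ u` with velocity `v = u'`, and
`Φ'` is the derivative of the squared frequency `Φ`. -/
structure IsOscillatorOn (Φ Φ' u v : ℝ → ℝ) (s : Set ℝ) : Prop where
  hasDerivAt_sqFrequency : ∀ x ∈ s, HasDerivAt Φ (Φ' x) x
  hasDerivAt_position : ∀ x ∈ s, HasDerivAt u (v x) x
  hasDerivAt_velocity : ∀ x ∈ s, HasDerivAt v (-(Φ x * u x)) x

/-- The energy `Φ u² + v²` of an oscillator with squared frequency `Φ`, position `u` and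
velocity `v`. -/
def oscillatorEnergy (Φ u v : ℝ → ℝ) (x : ℝ) : ℝ :=
  Φ x * u x ^ 2 + v x ^ 2

variable {Φ Φ' u v : ℝ → ℝ} {s : Set ℝ}

theorem IsOscillatorOn.mono {t : Set ℝ} (h : IsOscillatorOn Φ Φ' u v t) (hst : s ⊆ t) :
    IsOscillatorOn Φ Φ' u v s :=
  ⟨fun x hx => h.1 x (hst hx), fun x hx => h.2 x (hst hx), fun x hx => h.3 x (hst hx)⟩

theorem IsOscillatorOn.hasDerivAt_energy (h : IsOscillatorOn Φ Φ' u v s) {x : ℝ} (hx : x ∈ s) :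
    HasDerivAt (oscillatorEnergy Φ u v) (Φ' x * u x ^ 2) x := by
  refine (((h.1 x hx).mul ((h.2 x hx).pow 2)).add ((h.3 x hx).pow 2)).congr_deriv ?_
  simp only [Pi.pow_apply]
  ring

theorem IsOscillatorOn.hasDerivAt_position_mul_velocity (h : IsOscillatorOn Φ Φ' u v s) {x : ℝ}
    (hx : x ∈ s) :
    HasDerivAt (fun y => u y * v y) (oscillatorEnergy Φ u v x - 2 * Φ x * u x ^ 2) x := by
  refine ((h.2 x hx).mul (h.3 x hx)).congr_deriv ?_
  rw [oscillatorEnergy]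
  ring

theorem mul_sq_le_oscillatorEnergy {c x : ℝ} (hc : c ≤ Φ x) :
    c * u x ^ 2 ≤ oscillatorEnergy Φ u v x :=
  le_add_of_le_of_nonneg (mul_le_mul_of_nonneg_right hc (sq_nonneg _)) (sq_nonneg _)

theorem oscillatorEnergy_nonneg {x : ℝ} (hΦ : 0 ≤ Φ x) : 0 ≤ oscillatorEnergy Φ u v x :=
  add_nonneg (mul_nonneg hΦ (sq_nonneg _)) (sq_nonneg _)

theorem two_mul_abs_mul_le_oscillatorEnergy {m x : ℝ} (hΦ : m ^ 2 ≤ Φ x) :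
    2 * m * |u x * v x| ≤ oscillatorEnergy Φ u v x := by
  rw [oscillatorEnergy, abs_mul, ← sq_abs (u x), ← sq_abs (v x)]
  have := mul_le_mul_of_nonneg_right hΦ (sq_nonneg |u x|)
  nlinarith [sq_nonneg (m * |u x| - |v x|)]

theorem le_mul_exp_of_neg_mul_le_deriv {E E' G G' : ℝ → ℝ} {x y : ℝ} (hxy : x ≤ y)
    (hE : ∀ z ∈ Icc x y, HasDerivAt E (E' z) z) (hG : ∀ z ∈ Icc x y, HasDerivAt G (G' z) z)
    (h : ∀ z ∈ Icc x y, -(G' z * E z) ≤ E' z) : E x ≤ E y * Real.exp (G y - G x) := by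
  have hd : ∀ z ∈ Icc x y, HasDerivAt (fun z => E z * Real.exp (G z))
      ((E' z + G' z * E z) * Real.exp (G z)) z := fun z hz =>
    ((hE z hz).mul (hG z hz).exp).congr_deriv (by ring)
  have hmono := monotoneOn_of_hasDerivWithinAt_nonneg (convex_Icc x y)
    (fun z hz => (hd z hz).continuousAt.continuousWithinAt)
    (fun z hz => (hd z (interior_subset hz)).hasDerivWithinAt)
    (fun z hz => mul_nonneg (by linarith [h z (interior_subset hz)]) (Real.exp_pos _).le)
  rw [Real.exp_sub, ← mul_div_assoc, le_div_iff₀ (Real.exp_pos _)]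
  exact hmono (left_mem_Icc.2 hxy) (right_mem_Icc.2 hxy) hxy

theorem le_mul_exp_of_abs_deriv_le {E E' : ℝ → ℝ} {κ p q x y : ℝ}
    (hE : ∀ z ∈ Icc p q, HasDerivAt E (E' z) z) (h : ∀ z ∈ Icc p q, |E' z| ≤ κ * E z)
    (hx : x ∈ Icc p q) (hy : y ∈ Icc p q) : E x ≤ E y * Real.exp (κ * |x - y|) := by
  have hlin (c z : ℝ) : HasDerivAt (fun w => c * w) c z := by
    simpa using (hasDerivAt_id z).const_mul c
  rcases le_total x y with hxy | hyx
  · have hsub : Icc x y ⊆ Icc p q := Icc_subset_Icc hx.1 hy.2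
    have := le_mul_exp_of_neg_mul_le_deriv hxy (fun z hz => hE z (hsub hz)) (fun z _ => hlin κ z)
      (fun z hz => neg_le_of_abs_le (h z (hsub hz)))
    rwa [abs_sub_comm, abs_of_nonneg (sub_nonneg.2 hxy), mul_sub]
  · have hsub : Icc y x ⊆ Icc p q := Icc_subset_Icc hy.1 hx.2
    have := le_mul_exp_of_neg_mul_le_deriv (E := fun z => -E z) hyx
      (fun z hz => (hE z (hsub hz)).neg) (fun z _ => hlin (-κ) z)
      (fun z hz => by linarith [le_of_abs_le (h z (hsub hz))])
    rw [neg_mul, neg_le_neg_iff, ← mul_sub, neg_mul, Real.exp_neg, ← div_eq_mul_inv,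
      div_le_iff₀ (Real.exp_pos _)] at this
    rwa [abs_of_nonneg (sub_nonneg.2 hyx)]

theorem IsOscillatorOn.energy_le_mul_exp {p q c B x y : ℝ} (h : IsOscillatorOn Φ Φ' u v (Icc p q))
    (hc : 0 < c) (hΦ : ∀ z ∈ Icc p q, c ≤ Φ z) (hΦ' : ∀ z ∈ Icc p q, |Φ' z| ≤ B)
    (hx : x ∈ Icc p q) (hy : y ∈ Icc p q) :
    oscillatorEnergy Φ u v x ≤ oscillatorEnergy Φ u v y * Real.exp (B / c * (q - p)) := by
  have hB : 0 ≤ B := (abs_nonneg _).trans (hΦ' x hx)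
  refine (le_mul_exp_of_abs_deriv_le (κ := B / c) (fun z hz => h.hasDerivAt_energy hz)
    (fun z hz => ?_) hx hy).trans (mul_le_mul_of_nonneg_left (Real.exp_le_exp.2 ?_)
      (oscillatorEnergy_nonneg (hc.le.trans (hΦ y hy))))
  · rw [abs_mul, abs_of_nonneg (sq_nonneg (u z)), div_mul_eq_mul_div, le_div_iff₀ hc]
    calc |Φ' z| * u z ^ 2 * c ≤ B * u z ^ 2 * c := by gcongr; exact hΦ' z hz
      _ = B * (c * u z ^ 2) := by ring
      _ ≤ B * oscillatorEnergy Φ u v z := by gcongr; exact mul_sq_le_oscillatorEnergy (hΦ z hz)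
  · have : |x - y| ≤ q - p := abs_sub_le_of_le_of_le hx.1 hx.2 hy.1 hy.2
    gcongr

theorem IsOscillatorOn.intervalIntegrable_energy_sub {p q : ℝ}
    (h : IsOscillatorOn Φ Φ' u v (Icc p q)) (hpq : p ≤ q) :
    IntervalIntegrable (fun x => oscillatorEnergy Φ u v x - 2 * Φ x * u x ^ 2) volume p q := by
  have hΦ : ContinuousOn Φ (Icc p q) := fun x hx => (h.1 x hx).continuousAt.continuousWithinAt
  have hu : ContinuousOn u (Icc p q) := fun x hx => (h.2 x hx).continuousAt.continuousWithinAt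
  have hE : ContinuousOn (oscillatorEnergy Φ u v) (Icc p q) := fun x hx =>
    (h.hasDerivAt_energy hx).continuousAt.continuousWithinAt
  exact (hE.sub ((hΦ.const_mul 2).mul (hu.pow 2))).intervalIntegrable_of_Icc hpq

theorem IsOscillatorOn.integral_energy_sub {p q : ℝ} (h : IsOscillatorOn Φ Φ' u v (Icc p q))
    (hpq : p ≤ q) :
    ∫ x in p..q, (oscillatorEnergy Φ u v x - 2 * Φ x * u x ^ 2) = u q * v q - u p * v p :=
  intervalIntegral.integral_eq_sub_of_hasDerivAt
    (fun x hx => h.hasDerivAt_position_mul_velocity (by rwa [uIcc_of_le hpq] at hx))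
    (h.intervalIntegrable_energy_sub hpq)

/-- By the virial identity `(u v)' = E - 2 Φ u²`, the mean energy is close to that of `2 Φ u²`. -/
theorem IsOscillatorOn.energy_mul_le_integral {p q m B K y : ℝ}
    (h : IsOscillatorOn Φ Φ' u v (Icc p q)) (hm : 0 < m) (hΦ : ∀ z ∈ Icc p q, m ^ 2 ≤ Φ z)
    (hK : ∀ z ∈ Icc p q, Φ z ≤ K) (hΦ' : ∀ z ∈ Icc p q, |Φ' z| ≤ B) (hy : y ∈ Icc p q) :
    oscillatorEnergy Φ u v y * ((q - p) * Real.exp (-(B / m ^ 2 * (q - p))) -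
      Real.exp (B / m ^ 2 * (q - p)) / m) ≤ 2 * K * ∫ x in p..q, u x ^ 2 := by
  set E := oscillatorEnergy Φ u v
  set κ := B / m ^ 2 * (q - p)
  have hpq : p ≤ q := hy.1.trans hy.2
  have henergy {x z : ℝ} (hx : x ∈ Icc p q) (hz : z ∈ Icc p q) : E x ≤ E z * Real.exp κ :=
    h.energy_le_mul_exp (pow_pos hm 2) hΦ hΦ' hx hz
  have hboundary {x : ℝ} (hx : x ∈ Icc p q) : |u x * v x| ≤ E y * Real.exp κ / (2 * m) := by
    rw [le_div_iff₀' (by positivity)]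
    exact (two_mul_abs_mul_le_oscillatorEnergy (hΦ x hx)).trans (henergy hx hy)
  have hu : IntervalIntegrable (fun x => u x ^ 2) volume p q :=
    ContinuousOn.intervalIntegrable_of_Icc hpq fun x hx =>
      ((h.2 x hx).continuousAt.pow 2).continuousWithinAt
  have hmean : (q - p) * (E y * Real.exp (-κ)) - 2 * K * ∫ x in p..q, u x ^ 2 ≤
      u q * v q - u p * v p := by
    rw [← h.integral_energy_sub hpq, ← smul_eq_mul (q - p), ← intervalIntegral.integral_const,
      ← intervalIntegral.integral_const_mul,
      ← intervalIntegral.integral_sub intervalIntegrable_const (hu.const_mul _)]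
    refine intervalIntegral.integral_mono_on hpq (intervalIntegrable_const.sub (hu.const_mul _))
      (h.intervalIntegrable_energy_sub hpq) fun x hx => sub_le_sub ?_ ?_
    · rw [Real.exp_neg, ← div_eq_mul_inv, div_le_iff₀ (Real.exp_pos _)]
      exact henergy hy hx
    · exact mul_le_mul_of_nonneg_right (by linarith [hK x hx]) (sq_nonneg _)
  have hq := le_of_abs_le (hboundary (right_mem_Icc.2 hpq))
  have hp := neg_le_of_abs_le (hboundary (left_mem_Icc.2 hpq))
  have : E y * Real.exp κ / (2 * m) + E y * Real.exp κ / (2 * m) = E y * (Real.exp κ / m) := by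
    field_simp
    ring
  linarith

end Oscillators

section LiouvilleTransform

open Polynomial

/-- The frequency `2n + a + 1` of the `n`-th shifted Jacobi polynomial in the variable `x`,
`t = sin² x`. -/
def jacobiFrequency (a : ℝ) (n : ℕ) : ℝ := 2 * n + a + 1

/-- The weight `sin^(a + 1/2) cos^(1/2)` of the Liouville transformation. -/
noncomputable def liouvilleWeight (a x : ℝ) : ℝ :=
  Real.sin x ^ (a + 1 / 2) * Real.cos x ^ (1 / 2 : ℝ)

/-- The logarithmic derivative of `liouvilleWeight`. -/
noncomputable def liouvilleLogDeriv (a x : ℝ) : ℝ :=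
  (a + 1 / 2) * (Real.cos x / Real.sin x) - 1 / 2 * (Real.sin x / Real.cos x)

/-- The potential of the Liouville normal form of the Jacobi differential equation. -/
noncomputable def liouvillePotential (a x : ℝ) : ℝ :=
  (1 / 4 - a ^ 2) * (1 / Real.sin x ^ 2) + 1 / 4 * (1 / Real.cos x ^ 2)

/-- The derivative of `liouvillePotential`. -/
noncomputable def liouvillePotentialDeriv (a x : ℝ) : ℝ :=
  1 / 2 * (Real.sin x / Real.cos x ^ 3) - 2 * (1 / 4 - a ^ 2) * (Real.cos x / Real.sin x ^ 3)

/-- The squared frequency of the oscillator equation satisfied by `liouvilleJacobi a n`. -/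
noncomputable def liouvilleSqFrequency (a : ℝ) (n : ℕ) (x : ℝ) : ℝ :=
  jacobiFrequency a n ^ 2 + liouvillePotential a x

/-- The Liouville transform `w(x) Q_n(sin² x)` of the shifted Jacobi polynomial `Q_n`. -/
noncomputable def liouvilleJacobi (a : ℝ) (n : ℕ) (x : ℝ) : ℝ :=
  liouvilleWeight a x * (shiftedJacobi a n).eval (Real.sin x ^ 2)

/-- The derivative of `liouvilleJacobi`. -/
noncomputable def liouvilleVelocity (a : ℝ) (n : ℕ) (x : ℝ) : ℝ :=
  liouvilleWeight a x * (liouvilleLogDeriv a x * (shiftedJacobi a n).eval (Real.sin x ^ 2) +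
    2 * Real.sin x * Real.cos x * (derivative (shiftedJacobi a n)).eval (Real.sin x ^ 2))

/-- The oscillator energy of `liouvilleJacobi a n`. -/
noncomputable def liouvilleEnergy (a : ℝ) (n : ℕ) : ℝ → ℝ :=
  oscillatorEnergy (liouvilleSqFrequency a n) (liouvilleJacobi a n) (liouvilleVelocity a n)

variable {a x : ℝ}

theorem sin_pos_of_mem_Ioo_zero_pi_div_two (hx : x ∈ Ioo 0 (Real.pi / 2)) : 0 < Real.sin x :=
  Real.sin_pos_of_pos_of_lt_pi hx.1 (by linarith [hx.2, Real.pi_pos])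

theorem cos_pos_of_mem_Ioo_zero_pi_div_two (hx : x ∈ Ioo 0 (Real.pi / 2)) : 0 < Real.cos x :=
  Real.cos_pos_of_mem_Ioo ⟨by linarith [hx.1, Real.pi_pos], hx.2⟩

theorem hasDerivAt_eval_sin_sq (p : ℝ[X]) (x : ℝ) :
    HasDerivAt (fun y => p.eval (Real.sin y ^ 2))
      (2 * Real.sin x * Real.cos x * (derivative p).eval (Real.sin x ^ 2)) x := by
  refine ((p.hasDerivAt (Real.sin x ^ 2)).comp x ((Real.hasDerivAt_sin x).pow 2)).congr_deriv ?_
  norm_num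
  ring

theorem hasDerivAt_liouvilleWeight (a : ℝ) (hx : x ∈ Ioo 0 (Real.pi / 2)) :
    HasDerivAt (liouvilleWeight a) (liouvilleWeight a x * liouvilleLogDeriv a x) x := by
  have hs := sin_pos_of_mem_Ioo_zero_pi_div_two hx
  have hc := cos_pos_of_mem_Ioo_zero_pi_div_two hx
  refine (((Real.hasDerivAt_sin x).rpow_const (p := a + 1 / 2) (Or.inl hs.ne')).mul
    ((Real.hasDerivAt_cos x).rpow_const (p := 1 / 2) (Or.inl hc.ne'))).congr_deriv ?_
  rw [Real.rpow_sub_one hs.ne', Real.rpow_sub_one hc.ne', liouvilleWeight, liouvilleLogDeriv]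
  field_simp
  ring

theorem hasDerivAt_liouvilleLogDeriv (a : ℝ) (hx : x ∈ Ioo 0 (Real.pi / 2)) :
    HasDerivAt (liouvilleLogDeriv a)
      (-((a + 1 / 2) / Real.sin x ^ 2) - 1 / 2 / Real.cos x ^ 2) x := by
  have hs := sin_pos_of_mem_Ioo_zero_pi_div_two hx
  have hc := cos_pos_of_mem_Ioo_zero_pi_div_two hx
  refine ((((Real.hasDerivAt_cos x).div (Real.hasDerivAt_sin x) hs.ne').const_mul _).sub
    (((Real.hasDerivAt_sin x).div (Real.hasDerivAt_cos x) hc.ne').const_mul _)).congr_deriv ?_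
  have hsc := Real.sin_sq_add_cos_sq x
  field_simp
  linear_combination -((2 * a + 1) * Real.cos x ^ 2 + Real.sin x ^ 2) * hsc

theorem hasDerivAt_liouvillePotential (a : ℝ) (hx : x ∈ Ioo 0 (Real.pi / 2)) :
    HasDerivAt (liouvillePotential a) (liouvillePotentialDeriv a x) x := by
  have hs := sin_pos_of_mem_Ioo_zero_pi_div_two hx
  have hc := cos_pos_of_mem_Ioo_zero_pi_div_two hx
  have hsin := (hasDerivAt_const x 1).div ((Real.hasDerivAt_sin x).pow 2) (pow_ne_zero 2 hs.ne')
  have hcos := (hasDerivAt_const x 1).div ((Real.hasDerivAt_cos x).pow 2) (pow_ne_zero 2 hc.ne')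
  refine ((hsin.const_mul (1 / 4 - a ^ 2)).add (hcos.const_mul (1 / 4))).congr_deriv ?_
  simp only [liouvillePotentialDeriv, Pi.pow_apply]
  field_simp
  norm_num
  ring

theorem hasDerivAt_liouvilleJacobi (a : ℝ) (n : ℕ) (hx : x ∈ Ioo 0 (Real.pi / 2)) :
    HasDerivAt (liouvilleJacobi a n) (liouvilleVelocity a n x) x := by
  refine ((hasDerivAt_liouvilleWeight a hx).mul
    (hasDerivAt_eval_sin_sq (shiftedJacobi a n) x)).congr_deriv ?_
  rw [liouvilleVelocity]
  ring

theorem liouvilleLogDeriv_riccati (a : ℝ) (n : ℕ) (hx : x ∈ Ioo 0 (Real.pi / 2)) :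
    liouvilleLogDeriv a x ^ 2 - (a + 1 / 2) / Real.sin x ^ 2 - 1 / 2 / Real.cos x ^ 2 =
      4 * n * (n + a + 1) - liouvilleSqFrequency a n x := by
  have hs := sin_pos_of_mem_Ioo_zero_pi_div_two hx
  have hc := cos_pos_of_mem_Ioo_zero_pi_div_two hx
  have hsc := Real.sin_sq_add_cos_sq x
  have hcot : (Real.cos x / Real.sin x) ^ 2 = 1 / Real.sin x ^ 2 - 1 := by
    rw [div_pow, eq_sub_of_add_eq' hsc]
    field_simp
  have htan : (Real.sin x / Real.cos x) ^ 2 = 1 / Real.cos x ^ 2 - 1 := by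
    rw [div_pow, eq_sub_of_add_eq hsc]
    field_simp
  have hcottan : (Real.cos x / Real.sin x) * (Real.sin x / Real.cos x) = 1 := by
    field_simp
  rw [liouvilleLogDeriv, liouvilleSqFrequency, jacobiFrequency, liouvillePotential]
  linear_combination (a + 1 / 2) ^ 2 * hcot + 1 / 4 * htan - (a + 1 / 2) * hcottan

theorem hasDerivAt_liouvilleVelocity (ha : -1 < a) (n : ℕ) (hx : x ∈ Ioo 0 (Real.pi / 2)) :
    HasDerivAt (liouvilleVelocity a n) (-(liouvilleSqFrequency a n x * liouvilleJacobi a n x))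
      x := by
  have hs := sin_pos_of_mem_Ioo_zero_pi_div_two hx
  have hc := cos_pos_of_mem_Ioo_zero_pi_div_two hx
  have hQ := hasDerivAt_eval_sin_sq (shiftedJacobi a n) x
  have hD := hasDerivAt_eval_sin_sq (derivative (shiftedJacobi a n)) x
  refine ((hasDerivAt_liouvilleWeight a hx).mul (((hasDerivAt_liouvilleLogDeriv a hx).mul hQ).add
    ((((Real.hasDerivAt_sin x).const_mul 2).mul (Real.hasDerivAt_cos x)).mul hD))).congr_deriv ?_
  have hsc := Real.sin_sq_add_cos_sq x
  have hode := eval_shiftedJacobi_differential_equation ha n (Real.sin x ^ 2)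
  rw [← eq_sub_of_add_eq' hsc] at hode
  have hlog : Real.sin x * Real.cos x * liouvilleLogDeriv a x =
      (a + 1 / 2) * Real.cos x ^ 2 - 1 / 2 * Real.sin x ^ 2 := by
    rw [liouvilleLogDeriv]
    field_simp
  simp only [liouvilleJacobi, Pi.mul_apply, Pi.add_apply]
  linear_combination
    liouvilleWeight a x * (shiftedJacobi a n).eval (Real.sin x ^ 2) *
      liouvilleLogDeriv_riccati a n hx + 4 * liouvilleWeight a x * hode +
    4 * liouvilleWeight a x * (derivative (shiftedJacobi a n)).eval (Real.sin x ^ 2) *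
      (hlog + (a + 1) * hsc)

theorem isOscillatorOn_liouvilleJacobi (ha : -1 < a) (n : ℕ) :
    IsOscillatorOn (liouvilleSqFrequency a n) (liouvillePotentialDeriv a) (liouvilleJacobi a n)
      (liouvilleVelocity a n) (Ioo 0 (Real.pi / 2)) where
  hasDerivAt_sqFrequency _ hx := (hasDerivAt_liouvillePotential a hx).const_add _
  hasDerivAt_position _ hx := hasDerivAt_liouvilleJacobi a n hx
  hasDerivAt_velocity _ hx := hasDerivAt_liouvilleVelocity ha n hx

end LiouvilleTransform

section Estimates

open Polynomial

variable {a x : ℝ} {n : ℕ}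

theorem sq_liouvilleJacobi (a : ℝ) (n : ℕ) (hx : x ∈ Ioo 0 (Real.pi / 2)) :
    liouvilleJacobi a n x ^ 2 = (Real.sin x ^ 2) ^ (a + 1 / 2) * Real.cos x *
      (shiftedJacobi a n).eval (Real.sin x ^ 2) ^ 2 := by
  have hs := sin_pos_of_mem_Ioo_zero_pi_div_two hx
  have hc := cos_pos_of_mem_Ioo_zero_pi_div_two hx
  rw [liouvilleJacobi, liouvilleWeight, mul_pow, mul_pow, ← Real.sqrt_eq_rpow, Real.sq_sqrt hc.le,
    Real.rpow_pow_comm hs.le]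

theorem mul_sq_le_liouvilleSqFrequency (hx : x ∈ Ioo 0 (Real.pi / 2))
    (ha : 4 * |a| ≤ jacobiFrequency a n * Real.sin x) :
    15 / 16 * jacobiFrequency a n ^ 2 ≤ liouvilleSqFrequency a n x := by
  have hs := sin_pos_of_mem_Ioo_zero_pi_div_two hx
  have hc := cos_pos_of_mem_Ioo_zero_pi_div_two hx
  have hdiv : |a| / Real.sin x ≤ jacobiFrequency a n / 4 := by
    rw [div_le_iff₀ hs]
    linarith
  have hsq := pow_le_pow_left₀ (by positivity) hdiv 2
  rw [div_pow, sq_abs] at hsq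
  have : 0 < 1 / Real.sin x ^ 2 := by positivity
  have : 0 < 1 / Real.cos x ^ 2 := by positivity
  rw [liouvilleSqFrequency, liouvillePotential]
  linarith [mul_one_div (a ^ 2) (Real.sin x ^ 2)]

theorem neg_cos_div_sin_le_liouvillePotentialDeriv (a : ℝ) (hx : x ∈ Ioo 0 (Real.pi / 2)) :
    -(1 / 2 * (Real.cos x / Real.sin x ^ 3)) ≤ liouvillePotentialDeriv a x := by
  have hs := sin_pos_of_mem_Ioo_zero_pi_div_two hx
  have hc := cos_pos_of_mem_Ioo_zero_pi_div_two hx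
  have : 0 ≤ a ^ 2 * (Real.cos x / Real.sin x ^ 3) := by positivity
  have : 0 ≤ Real.sin x / Real.cos x ^ 3 := by positivity
  rw [liouvillePotentialDeriv]
  linarith

theorem hasDerivAt_neg_const_div_sin_sq (c : ℝ) (hx : x ∈ Ioo 0 (Real.pi / 2)) :
    HasDerivAt (fun y => -(c / Real.sin y ^ 2)) (2 * c * (Real.cos x / Real.sin x ^ 3)) x := by
  have hs := sin_pos_of_mem_Ioo_zero_pi_div_two hx
  refine ((hasDerivAt_const x c).div ((Real.hasDerivAt_sin x).pow 2)
    (pow_ne_zero 2 hs.ne')).neg.congr_deriv ?_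
  simp only [Pi.pow_apply]
  field_simp
  norm_num
  ring

theorem liouvilleEnergy_le_exp_mul {y : ℝ} (ha : -1 < a) (hx : 0 < x) (hxy : x ≤ y)
    (hy : y < Real.pi / 2) (hn : 0 < jacobiFrequency a n)
    (hxa : 4 * |a| ≤ jacobiFrequency a n * Real.sin x)
    (hx3 : 3 ≤ jacobiFrequency a n * Real.sin x) :
    liouvilleEnergy a n x ≤ liouvilleEnergy a n y * Real.exp (4 / 135) := by
  set ω := jacobiFrequency a n
  have hmem : Icc x y ⊆ Ioo 0 (Real.pi / 2) := Icc_subset_Ioo hx hy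
  have hfreq (z) (hz : z ∈ Icc x y) : 15 / 16 * ω ^ 2 ≤ liouvilleSqFrequency a n z := by
    refine mul_sq_le_liouvilleSqFrequency (hmem hz) (hxa.trans ?_)
    gcongr
    exact Real.sin_le_sin_of_le_of_le_pi_div_two (by linarith [Real.pi_pos])
      (hmem hz).2.le hz.1
  have hE (z) (hz : z ∈ Icc x y) : 15 / 16 * ω ^ 2 * liouvilleJacobi a n z ^ 2 ≤
      liouvilleEnergy a n z := mul_sq_le_oscillatorEnergy (hfreq z hz)
  have hgron := le_mul_exp_of_neg_mul_le_deriv hxy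
    (fun z hz => (isOscillatorOn_liouvilleJacobi ha n).hasDerivAt_energy (hmem hz))
    (fun z hz => hasDerivAt_neg_const_div_sin_sq (4 / (15 * ω ^ 2)) (hmem hz)) (fun z hz => by
      have hs := sin_pos_of_mem_Ioo_zero_pi_div_two (hmem hz)
      have hc := cos_pos_of_mem_Ioo_zero_pi_div_two (hmem hz)
      calc -(2 * (4 / (15 * ω ^ 2)) * (Real.cos z / Real.sin z ^ 3) * liouvilleEnergy a n z)
          ≤ -(2 * (4 / (15 * ω ^ 2)) * (Real.cos z / Real.sin z ^ 3) *
              (15 / 16 * ω ^ 2 * liouvilleJacobi a n z ^ 2)) := by gcongr; exact hE z hz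
        _ = -(1 / 2 * (Real.cos z / Real.sin z ^ 3)) * liouvilleJacobi a n z ^ 2 := by
          field_simp
          norm_num
        _ ≤ _ := by gcongr; exact neg_cos_div_sin_le_liouvillePotentialDeriv a (hmem hz))
  have hEy : 0 ≤ liouvilleEnergy a n y :=
    (by positivity : 0 ≤ 15 / 16 * ω ^ 2 * liouvilleJacobi a n y ^ 2).trans
      (hE y (right_mem_Icc.2 hxy))
  refine hgron.trans (mul_le_mul_of_nonneg_left (Real.exp_le_exp.2 ?_) hEy)
  have hsx : 4 / (15 * ω ^ 2) / Real.sin x ^ 2 ≤ 4 / 135 := by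
    rw [div_div, mul_assoc, ← mul_pow, div_le_div_iff₀ (by positivity) (by norm_num)]
    nlinarith
  have : 0 ≤ 4 / (15 * ω ^ 2) / Real.sin y ^ 2 := by positivity
  linarith

theorem sq_liouvilleJacobi_eq_comp_mul (a : ℝ) (n : ℕ) (hx : x ∈ Ioo 0 (Real.pi / 2)) :
    liouvilleJacobi a n x ^ 2 =
      1 / 2 * (((fun t => t ^ a * (shiftedJacobi a n ^ 2).eval t) ∘ fun y => Real.sin y ^ 2) x *
        (2 * Real.sin x * Real.cos x)) := by
  have hs := sin_pos_of_mem_Ioo_zero_pi_div_two hx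
  simp only [eval_pow, Function.comp_apply]
  rw [sq_liouvilleJacobi a n hx, Real.rpow_add (by positivity), ← Real.sqrt_eq_rpow,
    Real.sqrt_sq hs.le]
  ring

theorem integral_sq_liouvilleJacobi_le {p q : ℝ} (ha : -1 < a) (n : ℕ) (hp : 0 < p) (hpq : p ≤ q)
    (hq : q < Real.pi / 2) :
    ∫ x in p..q, liouvilleJacobi a n x ^ 2 ≤ jacobiNormSq a n / 2 := by
  have hmem : Icc p q ⊆ Ioo 0 (Real.pi / 2) := Icc_subset_Ioo hp hq
  set f : ℝ → ℝ := fun t => t ^ a * (shiftedJacobi a n ^ 2).eval t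
  have hderiv (x : ℝ) : HasDerivAt (fun y => Real.sin y ^ 2) (2 * Real.sin x * Real.cos x) x := by
    simpa using hasDerivAt_eval_sin_sq X x
  have hcont : ContinuousOn f ((fun y => Real.sin y ^ 2) '' uIcc p q) := by
    rintro _ ⟨x, hx, rfl⟩
    rw [uIcc_of_le hpq] at hx
    have hs := sin_pos_of_mem_Ioo_zero_pi_div_two (hmem hx)
    exact ((Real.continuousAt_rpow_const _ _ (Or.inl (pow_ne_zero 2 hs.ne'))).mul
      (shiftedJacobi a n ^ 2).continuous.continuousAt).continuousWithinAt
  have hsub : ∫ x in p..q, liouvilleJacobi a n x ^ 2 =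
      1 / 2 * ∫ t in Real.sin p ^ 2..Real.sin q ^ 2, f t := by
    rw [intervalIntegral.integral_congr fun x hx =>
        sq_liouvilleJacobi_eq_comp_mul a n (hmem (uIcc_of_le hpq ▸ hx)),
      intervalIntegral.integral_const_mul,
      intervalIntegral.integral_comp_mul_deriv' (fun x _ => hderiv x) (by fun_prop) hcont]
  have hsin : Real.sin p ^ 2 ≤ Real.sin q ^ 2 := by
    have hs := sin_pos_of_mem_Ioo_zero_pi_div_two (hmem (left_mem_Icc.2 hpq))
    gcongr
    exact Real.sin_le_sin_of_le_of_le_pi_div_two (by linarith [Real.pi_pos]) hq.le hpq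
  have hmono : ∫ t in Real.sin p ^ 2..Real.sin q ^ 2, f t ≤ jacobiNormSq a n := by
    refine intervalIntegral.integral_mono_interval (sq_nonneg _) hsin (Real.sin_sq_le_one q) ?_
      (intervalIntegrable_rpow_mul ha (shiftedJacobi a n ^ 2).continuous 0 1)
    filter_upwards [ae_restrict_mem measurableSet_Ioc] with t ht
    exact mul_nonneg (Real.rpow_nonneg ht.1.le _) (by rw [eval_pow]; exact sq_nonneg _)
  linarith

theorem exists_abs_liouvillePotential_le {p q : ℝ} (a : ℝ) (hp : 0 < p) (hq : q < Real.pi / 2) :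
    ∃ B, ∀ x ∈ Icc p q, |liouvillePotential a x| ≤ B ∧ |liouvillePotentialDeriv a x| ≤ B := by
  have hmem : Icc p q ⊆ Ioo 0 (Real.pi / 2) := Icc_subset_Ioo hp hq
  obtain ⟨B, hB⟩ := isCompact_Icc.exists_bound_of_continuousOn (f := liouvillePotential a)
    fun x hx => (hasDerivAt_liouvillePotential a (hmem hx)).continuousAt.continuousWithinAt
  have hcont : ContinuousOn (liouvillePotentialDeriv a) (Icc p q) := by
    unfold liouvillePotentialDeriv
    have hs : ∀ x ∈ Icc p q, Real.sin x ^ 3 ≠ 0 := fun x hx =>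
      pow_ne_zero 3 (sin_pos_of_mem_Ioo_zero_pi_div_two (hmem hx)).ne'
    have hc : ∀ x ∈ Icc p q, Real.cos x ^ 3 ≠ 0 := fun x hx =>
      pow_ne_zero 3 (cos_pos_of_mem_Ioo_zero_pi_div_two (hmem hx)).ne'
    fun_prop (disch := assumption)
  obtain ⟨B', hB'⟩ := isCompact_Icc.exists_bound_of_continuousOn hcont
  exact ⟨max B B', fun x hx => ⟨(hB x hx).trans (le_max_left _ _),
    (hB' x hx).trans (le_max_right _ _)⟩⟩

theorem liouvilleEnergy_mul_le {p q y B : ℝ} (ha : -1 < a) (n : ℕ) (hp : 0 < p)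
    (hq : q < Real.pi / 2) (hy : y ∈ Icc p q)
    (hB : ∀ x ∈ Icc p q, |liouvillePotential a x| ≤ B ∧ |liouvillePotentialDeriv a x| ≤ B)
    (hω : 0 < jacobiFrequency a n) (hBω : B ≤ 3 / 4 * jacobiFrequency a n ^ 2) :
    liouvilleEnergy a n y *
        ((q - p) * Real.exp (-(4 * B * (q - p) / jacobiFrequency a n ^ 2)) -
          Real.exp (4 * B * (q - p) / jacobiFrequency a n ^ 2) / (jacobiFrequency a n / 2)) ≤
      (jacobiFrequency a n ^ 2 + B) * jacobiNormSq a n := by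
  have hosc := (isOscillatorOn_liouvilleJacobi ha n).mono (Icc_subset_Ioo hp hq)
  have hlow (z) (hz : z ∈ Icc p q) :
      (jacobiFrequency a n / 2) ^ 2 ≤ liouvilleSqFrequency a n z := by
    rw [liouvilleSqFrequency]
    linarith [neg_le_of_abs_le (hB z hz).1]
  have hupp (z) (hz : z ∈ Icc p q) : liouvilleSqFrequency a n z ≤ jacobiFrequency a n ^ 2 + B :=
    add_le_add_right (le_of_abs_le (hB z hz).1) _
  have hB0 : 0 ≤ B := (abs_nonneg _).trans (hB y hy).1
  have hκ : 4 * B * (q - p) / jacobiFrequency a n ^ 2 =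
      B / (jacobiFrequency a n / 2) ^ 2 * (q - p) := by ring
  rw [hκ]
  refine (hosc.energy_mul_le_integral (half_pos hω) hlow hupp (fun z hz => (hB z hz).2) hy).trans ?_
  calc 2 * (jacobiFrequency a n ^ 2 + B) * ∫ x in p..q, liouvilleJacobi a n x ^ 2
      ≤ 2 * (jacobiFrequency a n ^ 2 + B) * (jacobiNormSq a n / 2) := by
        gcongr
        exact integral_sq_liouvilleJacobi_le ha n hp (hy.1.trans hy.2) hq
    _ = _ := by ring

theorem tendsto_jacobiFrequency (a : ℝ) : Tendsto (jacobiFrequency a) atTop atTop :=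
  tendsto_atTop_add_const_right _ _ (tendsto_atTop_add_const_right _ _
    (tendsto_natCast_atTop_atTop.const_mul_atTop two_pos))

theorem tendsto_const_div_sq_jacobiFrequency (a c : ℝ) :
    Tendsto (fun n => c / jacobiFrequency a n ^ 2) atTop (𝓝 0) :=
  tendsto_const_nhds.div_atTop ((tendsto_pow_atTop two_ne_zero).comp (tendsto_jacobiFrequency a))

theorem tendsto_natCast_div_jacobiFrequency (a : ℝ) :
    Tendsto (fun n : ℕ => n / jacobiFrequency a n) atTop (𝓝 (1 / 2)) := by
  have hlim : Tendsto (fun n : ℕ => 2 + (a + 1) / (n : ℝ)) atTop (𝓝 2) := by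
    simpa using (tendsto_const_div_atTop_nhds_zero_nat (a + 1)).const_add (2 : ℝ)
  refine (one_div (2 : ℝ) ▸ hlim.inv₀ two_ne_zero).congr' ?_
  filter_upwards [eventually_gt_atTop 0] with n hn
  have : (0 : ℝ) < n := by exact_mod_cast hn
  rw [jacobiFrequency, inv_eq_iff_eq_inv, inv_div]
  field_simp
  ring

theorem tendsto_rpow_mul_jacobiNormSq (ha : -1 < a) :
    Tendsto (fun n : ℕ => (n : ℝ) ^ (2 * a + 1) * jacobiNormSq a n) atTop
      (𝓝 (Real.Gamma (a + 1) ^ 2 / 2)) := by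
  have hlim := ((tendsto_rpow_div_jacobiEndpoint ha).pow 2).mul
    (tendsto_natCast_div_jacobiFrequency a)
  rw [mul_one_div] at hlim
  refine hlim.congr' ?_
  filter_upwards [eventually_gt_atTop 0, (tendsto_jacobiFrequency a).eventually_gt_atTop 0]
    with n hn hω
  have hn : (0 : ℝ) < n := by exact_mod_cast hn
  have hnorm : jacobiNormSq a n = (jacobiEndpoint a n ^ 2)⁻¹ / jacobiFrequency a n := by
    rw [eq_div_iff hω.ne', ← jacobiNormSq_eq ha n, jacobiFrequency, mul_comm]
  rw [hnorm, Real.rpow_add_one hn.ne', mul_comm 2 a, Real.rpow_mul hn.le, Real.rpow_two, div_pow]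
  ring

theorem tendsto_mul_exp_neg_sub_exp_div {κ m : ℕ → ℝ} (L : ℝ) (hκ : Tendsto κ atTop (𝓝 0))
    (hm : Tendsto m atTop atTop) :
    Tendsto (fun n => L * Real.exp (-κ n) - Real.exp (κ n) / m n) atTop (𝓝 L) := by
  simpa using ((Real.continuous_exp.tendsto _).comp hκ.neg).const_mul L |>.sub
    (((Real.continuous_exp.tendsto _).comp hκ).div_atTop hm)

theorem eventually_rpow_mul_liouvilleEnergy_le {p q y c : ℝ} (ha : -1 < a) (hp : 0 < p)
    (hpq : p < q) (hq : q < Real.pi / 2) (hy : y ∈ Icc p q)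
    (hc : Real.Gamma (a + 1) ^ 2 / 2 / (q - p) < c) :
    ∀ᶠ n : ℕ in atTop,
      (n : ℝ) ^ (2 * a + 1) * liouvilleEnergy a n y ≤ c * jacobiFrequency a n ^ 2 := by
  obtain ⟨B, hB⟩ := exists_abs_liouvillePotential_le a hp hq
  have hω := tendsto_jacobiFrequency a
  have hden := tendsto_mul_exp_neg_sub_exp_div (q - p)
    (tendsto_const_div_sq_jacobiFrequency a (4 * B * (q - p))) (hω.atTop_div_const two_pos)
  have hnum : Tendsto (fun n : ℕ => (1 + B / jacobiFrequency a n ^ 2) *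
      ((n : ℝ) ^ (2 * a + 1) * jacobiNormSq a n)) atTop (𝓝 (Real.Gamma (a + 1) ^ 2 / 2)) := by
    simpa using ((tendsto_const_div_sq_jacobiFrequency a B).const_add 1).mul
      (tendsto_rpow_mul_jacobiNormSq ha)
  filter_upwards [(hnum.div hden (sub_pos.2 hpq).ne').eventually_le_const hc,
    hden.eventually_const_lt (sub_pos.2 hpq), hω.eventually_gt_atTop 0,
    (tendsto_const_div_sq_jacobiFrequency a B).eventually_le_const (by norm_num : (0 : ℝ) < 3 / 4)]
    with n hratio hpos hω hBω
  rw [div_le_iff₀ (by positivity)] at hBω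
  rw [Pi.div_apply, div_le_iff₀ hpos] at hratio
  refine le_of_mul_le_mul_right ?_ hpos
  set D := (q - p) * Real.exp (-(4 * B * (q - p) / jacobiFrequency a n ^ 2)) -
    Real.exp (4 * B * (q - p) / jacobiFrequency a n ^ 2) / (jacobiFrequency a n / 2)
  calc (n : ℝ) ^ (2 * a + 1) * liouvilleEnergy a n y * D
      ≤ (n : ℝ) ^ (2 * a + 1) * ((jacobiFrequency a n ^ 2 + B) * jacobiNormSq a n) := by
        rw [mul_assoc]
        exact mul_le_mul_of_nonneg_left (liouvilleEnergy_mul_le ha n hp hq hy hB hω hBω)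
          (by positivity)
    _ = (1 + B / jacobiFrequency a n ^ 2) * ((n : ℝ) ^ (2 * a + 1) * jacobiNormSq a n) *
        jacobiFrequency a n ^ 2 := by
        field_simp
    _ ≤ c * D * jacobiFrequency a n ^ 2 := by gcongr
    _ = c * jacobiFrequency a n ^ 2 * D := by ring

theorem rpow_mul_sq_liouvilleJacobi_le {c : ℝ} (ha : -1 / 2 < a)
    (hx : x ∈ Ioc 0 (Real.pi / 4)) (hn : 4 * a + 5 ≤ 2 * n * Real.sin x)
    (hE : (n : ℝ) ^ (2 * a + 1) * liouvilleEnergy a n (Real.pi / 4) ≤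
      c * jacobiFrequency a n ^ 2) :
    (n : ℝ) ^ (2 * a + 1) * liouvilleJacobi a n x ^ 2 ≤ 16 / 15 * Real.exp (4 / 135) * c := by
  have hpi := Real.pi_pos
  have hmem : x ∈ Ioo 0 (Real.pi / 2) := ⟨hx.1, by linarith [hx.2]⟩
  have hs := sin_pos_of_mem_Ioo_zero_pi_div_two hmem
  have hω : 0 < jacobiFrequency a n := by
    rw [jacobiFrequency]
    linarith [(n.cast_nonneg : (0 : ℝ) ≤ n)]
  have hωx : 4 * a + 5 + (a + 1) * Real.sin x ≤ jacobiFrequency a n * Real.sin x := by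
    rw [jacobiFrequency]
    linarith
  have : 0 < (a + 1) * Real.sin x := mul_pos (by linarith) hs
  have hxa : 4 * |a| ≤ jacobiFrequency a n * Real.sin x := by
    rcases abs_cases a with h | h <;> linarith
  have hnear := liouvilleEnergy_le_exp_mul (by linarith) hx.1 hx.2 (by linarith) hω hxa
    (by linarith)
  have hlow : 15 / 16 * jacobiFrequency a n ^ 2 * liouvilleJacobi a n x ^ 2 ≤
      liouvilleEnergy a n x := mul_sq_le_oscillatorEnergy (mul_sq_le_liouvilleSqFrequency hmem hxa)
  refine le_of_mul_le_mul_left ?_ (by positivity : 0 < 15 / 16 * jacobiFrequency a n ^ 2)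
  calc 15 / 16 * jacobiFrequency a n ^ 2 * ((n : ℝ) ^ (2 * a + 1) * liouvilleJacobi a n x ^ 2)
      = (n : ℝ) ^ (2 * a + 1) *
          (15 / 16 * jacobiFrequency a n ^ 2 * liouvilleJacobi a n x ^ 2) := by ring
    _ ≤ (n : ℝ) ^ (2 * a + 1) *
          (liouvilleEnergy a n (Real.pi / 4) * Real.exp (4 / 135)) := by
        exact mul_le_mul_of_nonneg_left (hlow.trans hnear) (by positivity)
    _ = (n : ℝ) ^ (2 * a + 1) * liouvilleEnergy a n (Real.pi / 4) * Real.exp (4 / 135) := by ring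
    _ ≤ c * jacobiFrequency a n ^ 2 * Real.exp (4 / 135) := by gcongr
    _ = _ := by ring

theorem exp_const_mul_le_sqrt_two : 16 / 15 * Real.exp (4 / 135) * (32 / 25) ≤ √2 := by
  have hexp : Real.exp (4 / 135) ≤ 135 / 131 :=
    (Real.exp_bound_div_one_sub_of_interval (by norm_num) (by norm_num)).trans_eq (by norm_num)
  calc 16 / 15 * Real.exp (4 / 135) * (32 / 25) ≤ 16 / 15 * (135 / 131) * (32 / 25) := by gcongr
    _ ≤ √2 := Real.le_sqrt_of_sq_le (by norm_num)

theorem sq_eval_shiftedJacobi_sin_sq_le {c : ℝ} (ha : -1 / 2 < a)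
    (hx : x ∈ Ioc 0 (Real.pi / 4)) (hn : 4 * a + 5 ≤ 2 * n * Real.sin x)
    (hE : (n : ℝ) ^ (2 * a + 1) * liouvilleEnergy a n (Real.pi / 4) ≤
      32 / 25 * c * jacobiFrequency a n ^ 2) (hc : 0 ≤ c) :
    (shiftedJacobi a n).eval (Real.sin x ^ 2) ^ 2 ≤
      2 * c * (n ^ 2 * Real.sin x ^ 2) ^ (-(a + 1 / 2)) := by
  have hpi := Real.pi_pos
  have hmem : x ∈ Ioo 0 (Real.pi / 2) := ⟨hx.1, by linarith [hx.2]⟩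
  have hs := sin_pos_of_mem_Ioo_zero_pi_div_two hmem
  have hn0 : (0 : ℝ) < n := by
    have : 0 < 2 * n * Real.sin x := by linarith
    linarith [pos_of_mul_pos_left this hs.le]
  have hcos : √2 / 2 ≤ Real.cos x := by
    rw [← Real.cos_pi_div_four]
    exact Real.cos_le_cos_of_nonneg_of_le_pi hx.1.le (by linarith) hx.2
  have hrpow : ((n : ℝ) ^ 2 * Real.sin x ^ 2) ^ (a + 1 / 2) =
      (n : ℝ) ^ (2 * a + 1) * (Real.sin x ^ 2) ^ (a + 1 / 2) := by
    rw [Real.mul_rpow (by positivity) (by positivity), ← Real.rpow_two, ← Real.rpow_mul hn0.le]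
    ring_nf
  rw [Real.rpow_neg (by positivity), ← div_eq_mul_inv, le_div_iff₀ (by positivity), hrpow]
  refine le_of_mul_le_mul_left ?_ (by positivity : 0 < √2 / 2)
  calc √2 / 2 * ((shiftedJacobi a n).eval (Real.sin x ^ 2) ^ 2 *
        ((n : ℝ) ^ (2 * a + 1) * (Real.sin x ^ 2) ^ (a + 1 / 2)))
      ≤ Real.cos x * ((shiftedJacobi a n).eval (Real.sin x ^ 2) ^ 2 *
        ((n : ℝ) ^ (2 * a + 1) * (Real.sin x ^ 2) ^ (a + 1 / 2))) := by gcongr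
    _ = (n : ℝ) ^ (2 * a + 1) * liouvilleJacobi a n x ^ 2 := by
        rw [sq_liouvilleJacobi a n hmem]
        ring
    _ ≤ 16 / 15 * Real.exp (4 / 135) * (32 / 25) * c :=
        (rpow_mul_sq_liouvilleJacobi_le ha hx hn hE).trans_eq (by ring)
    _ ≤ √2 * c := mul_le_mul_of_nonneg_right exp_const_mul_le_sqrt_two hc
    _ = √2 / 2 * (2 * c) := by ring

theorem eventually_sq_eval_shiftedJacobi_le_rpow (ha : -1 / 2 < a) :
    ∀ᶠ n : ℕ in atTop, ∀ t ∈ Ioc (0 : ℝ) (1 / 2), (4 * a + 5) ^ 2 ≤ 4 * (n ^ 2 * t) →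
      (shiftedJacobi a n).eval t ^ 2 ≤
        2 * (Real.Gamma (a + 1) ^ 2 / Real.pi) * (n ^ 2 * t) ^ (-(a + 1 / 2)) := by
  have hpi := Real.pi_pos
  have hΓ : 0 < Real.Gamma (a + 1) := Real.Gamma_pos_of_pos (by linarith)
  have hc : Real.Gamma (a + 1) ^ 2 / 2 / (9 * Real.pi / 20 - Real.pi / 20) <
      32 / 25 * (Real.Gamma (a + 1) ^ 2 / Real.pi) := by
    have : 0 < Real.Gamma (a + 1) ^ 2 / Real.pi := by positivity
    calc _ = 5 / 4 * (Real.Gamma (a + 1) ^ 2 / Real.pi) := by field_simp; norm_num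
      _ < _ := by linarith
  filter_upwards [eventually_rpow_mul_liouvilleEnergy_le (y := Real.pi / 4) (by linarith)
    (by linarith) (by linarith) (by linarith) ⟨by linarith, by linarith⟩ hc] with n hE t ht htn
  have hsin : Real.sin (Real.arcsin √t) = √t :=
    Real.sin_arcsin (by linarith [Real.sqrt_nonneg t]) (Real.sqrt_le_one.2 (by linarith [ht.2]))
  have hx : Real.arcsin √t ∈ Ioc 0 (Real.pi / 4) := by
    refine ⟨Real.arcsin_pos.2 (Real.sqrt_pos.2 ht.1),
      (Real.arcsin_le_iff_le_sin' ⟨by linarith, by linarith⟩).2 ?_⟩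
    rw [Real.sin_pi_div_four, Real.sqrt_le_left (by positivity), div_pow, Real.sq_sqrt two_pos.le]
    linarith [ht.2]
  have hnx : 4 * a + 5 ≤ 2 * n * Real.sin (Real.arcsin √t) := by
    refine le_of_sq_le_sq ?_ ?_
    · rw [hsin, mul_pow, Real.sq_sqrt ht.1.le]
      linarith
    · rw [hsin]
      positivity
  have h := sq_eval_shiftedJacobi_sin_sq_le ha hx hnx hE (by positivity)
  rwa [hsin, Real.sq_sqrt ht.1.le] at h

theorem eventually_sq_eval_shiftedJacobi_le_one (ha : -1 / 2 < a) :
    ∀ᶠ n : ℕ in atTop, ∀ t ∈ Icc (0 : ℝ) (1 / 2), (shiftedJacobi a n).eval t ^ 2 ≤ 1 := by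
  have hlim : Tendsto (fun n : ℕ => (n : ℝ) ^ 2 * ((2 * a + 1) / (2 * a + 2))) atTop atTop :=
    ((tendsto_pow_atTop two_ne_zero).comp tendsto_natCast_atTop_atTop).atTop_mul_const
      (div_pos (by linarith) (by linarith))
  have hrpow := (tendsto_rpow_neg_atTop (by linarith : 0 < a + 1 / 2)).comp hlim
  have hsmall := hrpow.const_mul (2 * (Real.Gamma (a + 1) ^ 2 / Real.pi))
  rw [mul_zero] at hsmall
  filter_upwards [eventually_sq_eval_shiftedJacobi_le_rpow ha, hsmall.eventually_le_const one_pos,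
    hlim.eventually_ge_atTop ((4 * a + 5) ^ 2), eventually_gt_atTop 0]
    with n hfar hone hlarge hn t ht
  rcases le_total ((2 * a + 2) * t) (2 * a + 1) with hta | hta
  · exact sq_eval_shiftedJacobi_le_one (by linarith) n ht.1 hta
  have hτ : 0 < (2 * a + 1) / (2 * a + 2) := div_pos (by linarith) (by linarith)
  have hτt : (2 * a + 1) / (2 * a + 2) ≤ t := by
    rwa [div_le_iff₀' (by linarith)]
  have hmul : (n : ℝ) ^ 2 * ((2 * a + 1) / (2 * a + 2)) ≤ n ^ 2 * t := by gcongr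
  have hpos : 0 < (n : ℝ) ^ 2 * ((2 * a + 1) / (2 * a + 2)) := by positivity
  refine (hfar t ⟨hτ.trans_le hτt, ht.2⟩ (by linarith)).trans (le_trans ?_ hone)
  exact mul_le_mul_of_nonneg_left (Real.rpow_le_rpow_of_nonpos hpos hmul (by linarith))
    (by positivity)

end Estimates

section PowerLaw

variable {μ ν : Measure ℝ} {ζ p κ l₀ : ℝ}

theorem measure_le_of_isLowerSet (h : ∀ x, μ (Iic x) ≤ ν (Iic x)) {s : Set ℝ}
    (hs : IsLowerSet s) : μ s ≤ ν s := by
  by_cases hmax : ∃ m, IsGreatest s m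
  · obtain ⟨m, hm⟩ := hmax
    have : s = Iic m := Subset.antisymm hm.2 fun x hx => hs hx hm.1
    exact this ▸ h m
  · have hunion : s = ⋃ r ∈ {r : ℚ | (r : ℝ) ∈ s}, Iic (r : ℝ) := by
      refine Subset.antisymm (fun x hx => ?_) (iUnion₂_subset fun r hr x hx => hs hx hr)
      obtain ⟨y, hy, hxy⟩ : ∃ y ∈ s, x < y := by
        by_contra! hle
        exact hmax ⟨x, hx, hle⟩
      obtain ⟨r, hxr, hry⟩ := exists_rat_btwn hxy
      exact mem_iUnion₂.2 ⟨r, hs hry.le hy, hxr.le⟩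
    have hdir : DirectedOn (Function.onFun (· ⊆ ·) fun r : ℚ => Iic (r : ℝ))
        {r : ℚ | (r : ℝ) ∈ s} := by
      intro r hr r' hr'
      rcases le_total r r' with hle | hle
      · exact ⟨r', hr', Iic_subset_Iic.2 (mod_cast hle), Subset.rfl⟩
      · exact ⟨r, hr, Subset.rfl, Iic_subset_Iic.2 (mod_cast hle)⟩
    rw [hunion, measure_biUnion_eq_iSup (to_countable _) hdir,
      measure_biUnion_eq_iSup (to_countable _) hdir]
    exact iSup₂_mono fun r _ => h r

theorem lintegral_le_lintegral_of_antitone (h : ∀ x, μ (Iic x) ≤ ν (Iic x)) {g : ℝ → ℝ}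
    (hg : Antitone g) (hg0 : 0 ≤ g) :
    ∫⁻ x, ENNReal.ofReal (g x) ∂μ ≤ ∫⁻ x, ENNReal.ofReal (g x) ∂ν := by
  rw [lintegral_eq_lintegral_meas_le μ (ae_of_all _ hg0) hg.measurable.aemeasurable,
    lintegral_eq_lintegral_meas_le ν (ae_of_all _ hg0) hg.measurable.aemeasurable]
  exact lintegral_mono fun t =>
    measure_le_of_isLowerSet h fun x y hyx hx => le_trans hx (hg hyx)

/-- The extremal measure for the power-law condition `ρ ((0, l]) ≤ l ^ ζ`: its density is
`ζ * l ^ (ζ - 1)` on the positive half-line. -/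
noncomputable def powerLaw (ζ : ℝ) : Measure ℝ :=
  (volume.restrict (Ioi 0)).withDensity fun l => ENNReal.ofReal (ζ * l ^ (ζ - 1))

theorem setLIntegral_Ioc_density (hζ : 0 < ζ) {x : ℝ} (hx : 0 ≤ x) :
    ∫⁻ l in Ioc 0 x, ENNReal.ofReal (ζ * l ^ (ζ - 1)) = ENNReal.ofReal (x ^ ζ) := by
  have hint : IntegrableOn (fun l : ℝ => ζ * l ^ (ζ - 1)) (Ioc 0 x) :=
    ((intervalIntegrable_iff_integrableOn_Ioc_of_le hx).1
      (intervalIntegral.intervalIntegrable_rpow' (by linarith))).const_mul ζ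
  have hnonneg : 0 ≤ᵐ[volume.restrict (Ioc 0 x)] fun l : ℝ => ζ * l ^ (ζ - 1) :=
    (ae_restrict_mem measurableSet_Ioc).mono fun l hl =>
      mul_nonneg hζ.le (Real.rpow_nonneg hl.1.le _)
  rw [← ofReal_integral_eq_lintegral_ofReal hint hnonneg,
    ← intervalIntegral.integral_of_le hx, intervalIntegral.integral_const_mul,
    integral_rpow (Or.inl (by linarith)), sub_add_cancel, Real.zero_rpow hζ.ne', sub_zero,
    mul_div_cancel₀ _ hζ.ne']

theorem powerLaw_Iic (hζ : 0 < ζ) {x : ℝ} (hx : 0 ≤ x) :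
    powerLaw ζ (Iic x) = ENNReal.ofReal (x ^ ζ) := by
  rw [powerLaw, withDensity_apply _ measurableSet_Iic,
    Measure.restrict_restrict measurableSet_Iic, inter_comm, Ioi_inter_Iic,
    setLIntegral_Ioc_density hζ hx]

theorem setLIntegral_Ioi_density_mul_rpow (hζ : 0 < ζ) (hp : ζ < p) (hκ : 0 ≤ κ)
    (hl₀ : 0 < l₀) :
    ∫⁻ l in Ioi l₀, ENNReal.ofReal (ζ * l ^ (ζ - 1)) * ENNReal.ofReal (κ * (l₀ / l) ^ p) =
      ENNReal.ofReal (l₀ ^ ζ * (ζ / (p - ζ) * κ)) := by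
  have hcongr : ∀ l ∈ Ioi l₀,
      ENNReal.ofReal (ζ * l ^ (ζ - 1)) * ENNReal.ofReal (κ * (l₀ / l) ^ p) =
        ENNReal.ofReal (ζ * κ * l₀ ^ p * l ^ (ζ - 1 - p)) := by
    intro l hl
    have hlpos : 0 < l := hl₀.trans hl
    rw [← ENNReal.ofReal_mul (by positivity), Real.div_rpow hl₀.le hlpos.le,
      Real.rpow_sub hlpos (ζ - 1)]
    ring_nf
  have hnonneg : 0 ≤ᵐ[volume.restrict (Ioi l₀)] fun l : ℝ =>
      ζ * κ * l₀ ^ p * l ^ (ζ - 1 - p) := by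
    filter_upwards [ae_restrict_mem measurableSet_Ioi] with l hl
    have : 0 < l := hl₀.trans hl
    positivity
  have : p - ζ ≠ 0 := (sub_pos.2 hp).ne'
  rw [setLIntegral_congr_fun measurableSet_Ioi hcongr, ← ofReal_integral_eq_lintegral_ofReal
      ((integrableOn_Ioi_rpow_of_lt (by linarith) hl₀).const_mul _) hnonneg,
    integral_const_mul, integral_Ioi_rpow_of_lt (by linarith) hl₀,
    show ζ - 1 - p + 1 = ζ - p by ring, Real.rpow_sub hl₀]
  congr 1
  rw [← neg_sub p ζ]
  field_simp

/-- The antitone envelope of the functions bounded by `1` on `(-∞, l₀]` and by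
`min 1 (κ * (l₀ / l) ^ p)` for `l > l₀`. -/
noncomputable def decayEnvelope (p κ l₀ l : ℝ) : ℝ :=
  if l ≤ l₀ then 1 else min 1 (κ * (l₀ / l) ^ p)

theorem decayEnvelope_nonneg (hκ : 0 ≤ κ) (hl₀ : 0 < l₀) : 0 ≤ decayEnvelope p κ l₀ := by
  intro l
  rw [Pi.zero_apply, decayEnvelope]
  split_ifs with hl
  · exact zero_le_one
  · have : 0 < l := hl₀.trans (not_le.1 hl)
    positivity

theorem antitone_decayEnvelope (hp : 0 ≤ p) (hκ : 0 ≤ κ) (hl₀ : 0 < l₀) :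
    Antitone (decayEnvelope p κ l₀) := by
  intro l l' hll'
  by_cases hl : l ≤ l₀
  · rw [decayEnvelope, decayEnvelope, if_pos hl]
    split_ifs
    exacts [le_rfl, min_le_left _ _]
  · have hlpos : 0 < l := hl₀.trans (not_le.1 hl)
    have : 0 < l' := hlpos.trans_le hll'
    have : 0 ≤ l₀ / l' := by positivity
    rw [decayEnvelope, decayEnvelope, if_neg hl, if_neg fun hl' => hl (hll'.trans hl')]
    gcongr

theorem lintegral_decayEnvelope_powerLaw_le (hζ : 0 < ζ) (hp : ζ < p) (hκ : 0 ≤ κ)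
    (hl₀ : 0 < l₀) :
    ∫⁻ l, ENNReal.ofReal (decayEnvelope p κ l₀ l) ∂powerLaw ζ ≤
      ENNReal.ofReal (l₀ ^ ζ * (1 + ζ / (p - ζ) * κ)) := by
  have hg : Measurable (decayEnvelope p κ l₀) :=
    (antitone_decayEnvelope (hζ.trans hp).le hκ hl₀).measurable
  have : 0 < p - ζ := sub_pos.2 hp
  rw [powerLaw, lintegral_withDensity_eq_lintegral_mul _ (by fun_prop) hg.ennreal_ofReal,
    ← Ioc_union_Ioi_eq_Ioi hl₀.le, lintegral_union measurableSet_Ioi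
      (Ioc_disjoint_Ioi_same), mul_one_add, ENNReal.ofReal_add (by positivity) (by positivity),
    ← setLIntegral_Ioc_density hζ hl₀.le, ← setLIntegral_Ioi_density_mul_rpow hζ hp hκ hl₀]
  refine add_le_add (setLIntegral_mono' measurableSet_Ioc fun l hl => ?_)
    (setLIntegral_mono' measurableSet_Ioi fun l hl => ?_)
  · simp [decayEnvelope, hl.2]
  · rw [Pi.mul_apply, decayEnvelope, if_neg (not_le.2 hl)]
    gcongr
    exact min_le_right _ _

theorem restrict_Ioc_Iic_le_powerLaw (hζ : 0 < ζ) (ρ : Measure ℝ) [IsFiniteMeasure ρ]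
    (hρ : ∀ l ∈ Icc (0 : ℝ) 1, (ρ (Ioc 0 l)).toReal ≤ l ^ ζ) (x : ℝ) :
    ρ.restrict (Ioc 0 1) (Iic x) ≤ powerLaw ζ (Iic x) := by
  have hle : ∀ l ∈ Icc (0 : ℝ) 1, ρ (Ioc 0 l) ≤ powerLaw ζ (Iic l) := fun l hl => by
    rw [powerLaw_Iic hζ hl.1]
    exact (ENNReal.le_ofReal_iff_toReal_le (measure_ne_top _ _)
      (Real.rpow_nonneg hl.1 _)).2 (hρ l hl)
  rw [Measure.restrict_apply measurableSet_Iic, inter_comm, Ioc_inter_Iic]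
  rcases lt_or_ge x 0 with hx | hx
  · rw [Ioc_eq_empty_of_le ((min_le_right _ _).trans hx.le), measure_empty]
    exact zero_le
  · refine (hle (min 1 x) ⟨le_min zero_le_one hx, min_le_left _ _⟩).trans (measure_mono ?_)
    exact Iic_subset_Iic.2 (min_le_right _ _)

theorem setIntegral_le_of_powerLaw (hζ : 0 < ζ) (hp : ζ < p) (hκ : 0 ≤ κ) (hl₀ : 0 < l₀)
    (ρ : Measure ℝ) [IsFiniteMeasure ρ] (h0 : ρ {0} = 0)
    (hρ : ∀ l ∈ Icc (0 : ℝ) 1, (ρ (Ioc 0 l)).toReal ≤ l ^ ζ) {f : ℝ → ℝ}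
    (hf0 : 0 ≤ f) (hf1 : ∀ l ∈ Ioc (0 : ℝ) 1, f l ≤ 1)
    (hfκ : ∀ l ∈ Ioc l₀ 1, f l ≤ κ * (l₀ / l) ^ p) :
    ∫ l in Icc 0 1, f l ∂ρ ≤ l₀ ^ ζ * (1 + ζ / (p - ζ) * κ) := by
  have henv : ∀ l ∈ Ioc (0 : ℝ) 1, f l ≤ decayEnvelope p κ l₀ l := by
    intro l hl
    rw [decayEnvelope]
    split_ifs with hll₀
    exacts [hf1 l hl, le_min (hf1 l hl) (hfκ l ⟨not_le.1 hll₀, hl.2⟩)]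
  have : 0 < p - ζ := sub_pos.2 hp
  have hlint : ∫⁻ l in Ioc 0 1, ENNReal.ofReal ‖f l‖ ∂ρ ≤
      ENNReal.ofReal (l₀ ^ ζ * (1 + ζ / (p - ζ) * κ)) :=
    calc ∫⁻ l in Ioc 0 1, ENNReal.ofReal ‖f l‖ ∂ρ
        ≤ ∫⁻ l in Ioc 0 1, ENNReal.ofReal (decayEnvelope p κ l₀ l) ∂ρ :=
          setLIntegral_mono' measurableSet_Ioc fun l hl =>
            ENNReal.ofReal_le_ofReal ((Real.norm_of_nonneg (hf0 l)).trans_le (henv l hl))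
      _ ≤ ∫⁻ l, ENNReal.ofReal (decayEnvelope p κ l₀ l) ∂powerLaw ζ :=
          lintegral_le_lintegral_of_antitone (restrict_Ioc_Iic_le_powerLaw hζ ρ hρ)
            (antitone_decayEnvelope (hζ.trans hp).le hκ hl₀) (decayEnvelope_nonneg hκ hl₀)
      _ ≤ ENNReal.ofReal (l₀ ^ ζ * (1 + ζ / (p - ζ) * κ)) :=
          lintegral_decayEnvelope_powerLaw_le hζ hp hκ hl₀
  rw [← setIntegral_congr_set (Ioc_ae_eq_Icc' h0)]
  calc ∫ l in Ioc 0 1, f l ∂ρ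
      ≤ (∫⁻ l in Ioc 0 1, ENNReal.ofReal ‖f l‖ ∂ρ).toReal :=
        (le_abs_self _).trans (norm_integral_le_lintegral_norm f)
    _ ≤ l₀ ^ ζ * (1 + ζ / (p - ζ) * κ) := ENNReal.toReal_le_of_le_ofReal (by positivity) hlint

end PowerLaw

section Loss

theorem Gamma_sq_mul_rpow_eq_mul_div_rpow {a l y : ℝ} (ha : 0 < 4 * a + 5) (hl : 0 < l)
    (hy : 0 < y) :
    2 * (Real.Gamma (a + 1) ^ 2 / Real.pi) * (y * (l / 2)) ^ (-(a + 1 / 2)) =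
      2 ^ (2 * a + 2) * Real.Gamma (a + 1) ^ 2 / (Real.pi * (4 * a + 5) ^ (2 * a + 1)) *
        ((4 * a + 5) ^ 2 / 2 / y / l) ^ (a + 1 / 2) := by
  have hbase : y * (l / 2) =
      ((4 * a + 5) / 2) ^ (2 : ℝ) * ((4 * a + 5) ^ 2 / 2 / y / l)⁻¹ := by
    rw [Real.rpow_two]
    field_simp
  have htwo : (2 : ℝ) ^ (2 * a + 2) = 2 * 2 ^ (2 * a + 1) := by
    rw [show 2 * a + 2 = 1 + (2 * a + 1) by ring, Real.rpow_add two_pos, Real.rpow_one]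
  rw [hbase, Real.mul_rpow (by positivity) (by positivity), ← Real.rpow_mul (by positivity),
    Real.inv_rpow (by positivity), Real.rpow_neg (by positivity), inv_inv,
    show 2 * -(a + 1 / 2) = -(2 * a + 1) by ring, Real.rpow_neg (by positivity),
    Real.div_rpow ha.le two_pos.le, inv_div, htwo]
  ring

theorem eventually_setIntegral_sq_eval_shiftedJacobi_le {ζ a : ℝ} (hζ : 0 < ζ)
    (ha : ζ - 1 / 2 < a) (ρ : Measure ℝ) [IsFiniteMeasure ρ] (h0 : ρ {0} = 0)
    (hρ : ∀ l ∈ Icc (0 : ℝ) 1, (ρ (Ioc 0 l)).toReal ≤ l ^ ζ) :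
    ∀ᶠ n : ℕ in atTop, ∫ l in Icc 0 1, (shiftedJacobi a n).eval (l / 2) ^ 2 ∂ρ ≤
      ((4 * a + 5) ^ 2 / 2) ^ ζ * (1 + ζ / (a + 1 / 2 - ζ) *
        (2 ^ (2 * a + 2) * Real.Gamma (a + 1) ^ 2 / (Real.pi * (4 * a + 5) ^ (2 * a + 1)))) *
        (n : ℝ) ^ (-(2 * ζ)) := by
  have ha' : 0 < 4 * a + 5 := by linarith
  filter_upwards [eventually_sq_eval_shiftedJacobi_le_rpow (by linarith : -1 / 2 < a),
    eventually_sq_eval_shiftedJacobi_le_one (by linarith : -1 / 2 < a), eventually_gt_atTop 0]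
    with n hfar hone hn
  have hscale : ((4 * a + 5) ^ 2 / 2 / (n : ℝ) ^ 2) ^ ζ =
      ((4 * a + 5) ^ 2 / 2) ^ ζ * (n : ℝ) ^ (-(2 * ζ)) := by
    rw [Real.div_rpow (by positivity) (by positivity), ← Real.rpow_natCast_mul n.cast_nonneg,
      Real.rpow_neg n.cast_nonneg, Nat.cast_two, div_eq_mul_inv]
  rw [mul_right_comm, ← hscale]
  refine setIntegral_le_of_powerLaw hζ (by linarith) (by positivity) (by positivity) ρ h0 hρ
    (fun l => sq_nonneg _) (fun l hl => hone _ ⟨by linarith [hl.1], by linarith [hl.2]⟩)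
    fun l hl => ?_
  have hl0 : 0 < l := lt_trans (by positivity) hl.1
  rw [← Gamma_sq_mul_rpow_eq_mul_div_rpow ha' hl0 (by positivity)]
  refine hfar _ ⟨by linarith, by linarith [hl.2]⟩ ?_
  have := (div_lt_iff₀' (by positivity)).1 hl.1
  linarith

theorem exists_forall_le_mul_one_add_div {u A : ℕ → ℝ} (hA : ∀ n, 1 ≤ n → 0 < A n)
    (h : ∀ᶠ n in atTop, u n ≤ A n) : ∃ C > 0, ∀ n : ℕ, 1 ≤ n → u n ≤ A n * (1 + C / n) := by
  obtain ⟨N, hN⟩ := eventually_atTop.1 h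
  have hnonneg : ∀ n ∈ Finset.range N, 0 ≤ |n * (u n / A n)| := fun n _ => abs_nonneg _
  refine ⟨1 + ∑ n ∈ Finset.range N, |n * (u n / A n)|,
    add_pos_of_pos_of_nonneg one_pos (Finset.sum_nonneg hnonneg), fun n hn => ?_⟩
  have := Finset.sum_nonneg hnonneg
  have hn0 : (0 : ℝ) < n := mod_cast hn
  rw [← div_le_iff₀' (hA n hn)]
  rcases le_or_gt N n with hNn | hnN
  · exact ((div_le_one (hA n hn)).2 (hN n hNn)).trans (le_add_of_nonneg_right (by positivity))
  · have hterm := (le_abs_self _).trans (Finset.single_le_sum hnonneg (Finset.mem_range.2 hnN))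
    calc u n / A n = n * (u n / A n) / n := (mul_div_cancel_left₀ _ hn0.ne').symm
      _ ≤ (1 + ∑ n ∈ Finset.range N, |n * (u n / A n)|) / n := by gcongr; linarith
      _ ≤ 1 + (1 + ∑ n ∈ Finset.range N, |n * (u n / A n)|) / n := by linarith

end Loss

theorem hb_jacobi_schedule_upper_bound_general {ζ a : ℝ} (hζ : 0 < ζ) (ha : ζ - 1 / 2 < a)
    (ρ : Measure ℝ) [IsFiniteMeasure ρ] (h0 : ρ {0} = 0)
    (hpow : ∀ l ∈ Icc (0 : ℝ) 1, (ρ (Ioc 0 l)).toReal ≤ l ^ ζ) {q : ℕ → ℝ → ℝ}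
    (hq0 : ∀ l, q 0 l = 1)
    (hq1 : ∀ l, q 1 l = 1 - ((a + 1) * (a + 2) / (2 * (a + 1) ^ 2)) * l)
    (hqrec : ∀ n : ℕ, 1 ≤ n → ∀ l,
      q (n + 1) l =
        (1 - ((2 * (n : ℝ) + a + 1) * (2 * (n : ℝ) + a + 2) /
              (2 * ((n : ℝ) + a + 1) ^ 2)) * l) * q n l
        + ((n : ℝ) ^ 2 * (2 * (n : ℝ) + a + 2) /
              (((n : ℝ) + a + 1) ^ 2 * (2 * (n : ℝ) + a))) * (q n l - q (n - 1) l)) :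
    ∃ C > 0, ∀ n : ℕ, 1 ≤ n →
      (1 / 2) * ∫ l in Icc (0 : ℝ) 1, (q n l) ^ 2 ∂ρ ≤
        (1 / 2) *
          (((4 * a + 5) ^ 2 / 2) ^ ζ *
            (1 + (ζ / (a + 1 / 2 - ζ)) *
              ((2 : ℝ) ^ (2 * a + 2) * Real.Gamma (a + 1) ^ 2 /
                (Real.pi * (4 * a + 5) ^ (2 * a + 1))))) *
          (n : ℝ) ^ (-(2 * ζ)) * (1 + C / n) := by
  have ha' : 0 < 4 * a + 5 := by linarith
  have : 0 < a + 1 / 2 - ζ := by linarith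
  have hstep : ∀ n : ℕ, (2 * (n : ℝ) + a + 1) * (2 * (n : ℝ) + a + 2) /
      (2 * ((n : ℝ) + a + 1) ^ 2) = jacobiStep a n / 2 := fun n => by
    rw [jacobiStep, div_div, mul_comm (2 : ℝ) (_ ^ 2)]
  have heval : ∀ n l, q n l = (shiftedJacobi a n).eval (l / 2) := fun n l =>
    (eval_half_shiftedJacobi_eq hq0 (fun l => by simpa [← hstep 0] using hq1 l)
      (fun n hn l => by rw [← hstep, jacobiMomentum, hqrec n hn]) l n).symm
  refine exists_forall_le_mul_one_add_div (fun n hn => ?_) ?_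
  · have : (0 : ℝ) < n := mod_cast hn
    positivity
  · filter_upwards [eventually_setIntegral_sq_eval_shiftedJacobi_le hζ ha ρ h0 hpow] with n hn
    simp only [heval, mul_assoc] at hn ⊢
    gcongr

/-- Heavy Ball with the Jacobi-polynomial schedule (indices `(a,0)`,
`α_n = (2n+a+1)(2n+a+2)/(2(n+a+1)²)`, `β_n = n²(2n+a+2)/((n+a+1)²(2n+a))`):
under the power-law spectral condition `ρ((0,λ]) ≤ λ^ζ` and for
`a > max(0, ζ-1/2)`, the loss is bounded by `(1/2)S(ζ,a) n^{-2ζ}(1 + C/n)`. -/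
theorem hb_jacobi_schedule_upper_bound
    (ζ a : ℝ) (hζ : 0 < ζ) (ha : max 0 (ζ - 1/2) < a)
    (ρ : Measure ℝ) [IsFiniteMeasure ρ]
    (hsupp : ρ (Set.Icc (0:ℝ) 1)ᶜ = 0)
    (h0 : ρ {(0:ℝ)} = 0)
    (hpow : ∀ l ∈ Set.Icc (0:ℝ) 1, (ρ (Set.Ioc 0 l)).toReal ≤ l ^ ζ)
    (q : ℕ → ℝ → ℝ)
    (hq0 : ∀ l, q 0 l = 1)
    (hq1 : ∀ l, q 1 l = 1 - ((a + 1) * (a + 2) / (2 * (a + 1) ^ 2)) * l)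
    (hqrec : ∀ n : ℕ, 1 ≤ n → ∀ l,
      q (n + 1) l =
        (1 - ((2 * (n : ℝ) + a + 1) * (2 * (n : ℝ) + a + 2) /
              (2 * ((n : ℝ) + a + 1) ^ 2)) * l) * q n l
        + ((n : ℝ) ^ 2 * (2 * (n : ℝ) + a + 2) /
              (((n : ℝ) + a + 1) ^ 2 * (2 * (n : ℝ) + a))) * (q n l - q (n - 1) l)) :
    ∃ C > 0, ∀ n : ℕ, 1 ≤ n →
      (1/2) * ∫ l in Set.Icc (0:ℝ) 1, (q n l) ^ 2 ∂ρ ≤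
        (1/2) *
          (((4 * a + 5) ^ 2 / 2) ^ ζ *
            (1 + (ζ / (a + 1/2 - ζ)) *
              ((2:ℝ) ^ (2 * a + 2) * Real.Gamma (a + 1) ^ 2 /
                (Real.pi * (4 * a + 5) ^ (2 * a + 1))))) *
          (n : ℝ) ^ (-(2 * ζ)) * (1 + C / n) :=
  hb_jacobi_schedule_upper_bound_general hζ ((le_max_right _ _).trans_lt ha) ρ h0 hpow hq0 hq1 hqrec
end
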